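/- arXiv:math/0501306 — 6 statements merged into one kernel-verified Lean document; each statement's English description precedes it below -/
import Mathlib

section
/- Let I be a closed interval and let f : I → I be a continuous map. Then there exists n in ℕ ∪ {2^∞} such that the set P(f) of periods of all cycles of f equals the initial segment S(n) of the Sharkovsky ordering. -/
/-- The odd part of a natural number: `n = 2^k * oddPart n` with `oddPart n` odd (for `n ≠ 0`). -/
def oddPart (n : ℕ) : ℕ := n / 2 ^ (n.factorization 2)

/-- The Sharkovsky ordering `a <ₛ b`: powers of 2 in increasing order come first,
then for each dyadic level (in decreasing order of the power of 2) the numbers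
`2^k * odd` in decreasing order of the odd part, the odd numbers `> 1` being the largest. -/
def SharkLt (a b : ℕ) : Prop :=
  (oddPart a = 1 ∧ oddPart b = 1 ∧ a < b) ∨
  (oddPart a = 1 ∧ oddPart b ≠ 1) ∨
  (oddPart a ≠ 1 ∧ oddPart b ≠ 1 ∧
    (b.factorization 2 < a.factorization 2 ∨
      (a.factorization 2 = b.factorization 2 ∧ oddPart b < oddPart a)))

/-- The initial segment `S(n) = {m : m <ₛ n} ∪ {n}` of the Sharkovsky ordering. -/
def sharkSegment (n : ℕ) : Set ℕ := {m | SharkLt m n ∨ m = n}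

/-- The set of (minimal) periods of all cycles of `f` lying in `I`. -/
def periodsOn (f : ℝ → ℝ) (I : Set ℝ) : Set ℕ :=
  {n | 0 < n ∧ ∃ x ∈ I, Function.minimalPeriod f x = n}

section helpers

open Function Set

lemma exists_eq_fix {g : ℝ → ℝ} (hg : Continuous g) {a b : ℝ} (hab : a ≤ b)
    (h : (a ≤ g a ∧ g b ≤ b) ∨ (g a ≤ a ∧ b ≤ g b)) : ∃ x ∈ Icc a b, g x = x := by
  have hc : ContinuousOn (fun x => g x - x) (Icc a b) := by fun_prop
  rcases h with ⟨h1, h2⟩ | ⟨h1, h2⟩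
  · obtain ⟨x, hx, h⟩ := intermediate_value_Icc' hab hc (show (0:ℝ) ∈ _ from ⟨by simp; linarith, by simp; linarith⟩)
    exact ⟨x, hx, by simp at h; linarith⟩
  · obtain ⟨x, hx, h⟩ := intermediate_value_Icc hab hc (show (0:ℝ) ∈ _ from ⟨by simp; linarith, by simp; linarith⟩)
    exact ⟨x, hx, by simp at h; linarith⟩

lemma exists_greatest {g : ℝ → ℝ} (hg : Continuous g) {a b c : ℝ} (hab : a ≤ b)
    (ha : g a ≤ c) (hb : c ≤ g b) :
    ∃ x ∈ Icc a b, g x = c ∧ ∀ y ∈ Ioc x b, c < g y := by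
  have hcl : IsCompact (Icc a b ∩ g ⁻¹' Iic c) :=
    isCompact_Icc.inter_right (isClosed_Iic.preimage hg)
  obtain ⟨x, hx⟩ := hcl.exists_isGreatest ⟨a, ⟨le_rfl, hab⟩, ha⟩
  have hx1 := hx.1.1
  have hx2 : g x ≤ c := hx.1.2
  refine ⟨x, hx1, ?_, ?_⟩
  · obtain ⟨y, hy, hyc⟩ := intermediate_value_Icc hx1.2 hg.continuousOn (show c ∈ _ from ⟨hx2, hb⟩)
    have : y ≤ x := hx.2 ⟨⟨hx1.1.trans hy.1, hy.2⟩, hyc.le⟩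
    rw [← hyc, le_antisymm this hy.1]
  · intro y hy
    by_contra hcon
    have : y ≤ x := hx.2 ⟨⟨hx1.1.trans hy.1.le, hy.2⟩, not_lt.1 hcon⟩
    exact absurd hy.1 (not_lt.2 this)

lemma exists_least {g : ℝ → ℝ} (hg : Continuous g) {a b c : ℝ} (hab : a ≤ b)
    (ha : g a ≤ c) (hb : c ≤ g b) :
    ∃ x ∈ Icc a b, g x = c ∧ ∀ y ∈ Ico a x, g y < c := by
  have hcl : IsCompact (Icc a b ∩ g ⁻¹' Ici c) :=
    isCompact_Icc.inter_right (isClosed_Ici.preimage hg)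
  obtain ⟨x, hx⟩ := hcl.exists_isLeast ⟨b, ⟨hab, le_rfl⟩, hb⟩
  have hx1 := hx.1.1
  have hx2 : c ≤ g x := hx.1.2
  refine ⟨x, hx1, ?_, ?_⟩
  · obtain ⟨y, hy, hyc⟩ := intermediate_value_Icc hx1.1 hg.continuousOn (show c ∈ _ from ⟨ha, hx2⟩)
    have : x ≤ y := hx.2 ⟨⟨hy.1, hy.2.trans hx1.2⟩, hyc.ge⟩
    rw [← hyc, le_antisymm this hy.2]
  · intro y hy
    by_contra hcon
    have : x ≤ y := hx.2 ⟨⟨hy.1, hy.2.le.trans hx1.2⟩, not_lt.1 hcon⟩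
    exact absurd hy.2 (not_lt.2 this)

lemma sub_aux {g : ℝ → ℝ} (hg : Continuous g) {u w c d : ℝ} (huw : u ≤ w) (hcd : c ≤ d)
    (hu : g u = c) (hw : g w = d) :
    ∃ a' b', a' ≤ b' ∧ Icc a' b' ⊆ Icc u w ∧ g '' Icc a' b' = Icc c d := by
  obtain ⟨x, hx, hxc, hx'⟩ := exists_greatest hg huw hu.le (hw.symm ▸ hcd : c ≤ g w)
  obtain ⟨y, hy, hyd, hy'⟩ := exists_least hg hx.2 (hxc ▸ hcd : g x ≤ d) hw.ge
  refine ⟨x, y, hy.1, Icc_subset_Icc hx.1 hy.2, ?_⟩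
  apply Subset.antisymm
  · rintro _ ⟨t, ht, rfl⟩
    constructor
    · rcases eq_or_lt_of_le ht.1 with h | h
      · rw [← h, hxc]
      · exact (hx' t ⟨h, ht.2.trans hy.2⟩).le
    · rcases eq_or_lt_of_le ht.2 with h | h
      · rw [h, hyd]
      · exact (hy' t ⟨ht.1, h⟩).le
  · have := intermediate_value_Icc hy.1 hg.continuousOn
    rwa [hxc, hyd] at this

lemma exists_sub {g : ℝ → ℝ} (hg : Continuous g) {a b c d : ℝ} (hcd : c ≤ d)
    (h : Icc c d ⊆ g '' Icc a b) :
    ∃ a' b', a' ≤ b' ∧ Icc a' b' ⊆ Icc a b ∧ g '' Icc a' b' = Icc c d := by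
  obtain ⟨u, hu, huc⟩ := h ⟨le_rfl, hcd⟩
  obtain ⟨w, hw, hwd⟩ := h ⟨hcd, le_rfl⟩
  rcases le_total u w with huw | huw
  · obtain ⟨a', b', h1, h2, h3⟩ := sub_aux hg huw hcd huc hwd
    exact ⟨a', b', h1, h2.trans (Icc_subset_Icc hu.1 hw.2), h3⟩
  · obtain ⟨a', b', h1, h2, h3⟩ := sub_aux (g := fun x => - g x) hg.neg huw (neg_le_neg hcd)
      (by simp [hwd]) (by simp [huc])
    refine ⟨a', b', h1, h2.trans (Icc_subset_Icc hw.1 hu.2), ?_⟩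
    have h4 : g '' Icc a' b' = Neg.neg '' ((fun x => - g x) '' Icc a' b') := by
      rw [image_image]; simp
    rw [h4, h3]; simp

lemma loop_lemma {g : ℝ → ℝ} (hg : Continuous g) {p q k1 k2 : ℝ} (hk : k1 ≤ k2)
    (r : ℕ) (hJJ : Icc p q ⊆ g '' Icc p q) (hKJ : Icc p q ⊆ g '' Icc k1 k2)
    (hJK : Icc k1 k2 ⊆ g^[r] '' Icc p q) (k : ℕ) :
    ∃ x ∈ Icc k1 k2, (∀ i, 1 ≤ i → i ≤ k + 1 → g^[i] x ∈ Icc p q) ∧ g^[1 + k + r] x = x := by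
  have step : ∀ k : ℕ, ∃ a b, a ≤ b ∧ Icc a b ⊆ Icc p q ∧
      (∀ x ∈ Icc a b, ∀ i ≤ k, g^[i] x ∈ Icc p q) ∧ g^[k + r] '' Icc a b = Icc k1 k2 := by
    intro k
    induction k with
    | zero =>
      obtain ⟨a, b, h1, h2, h3⟩ := exists_sub (hg.iterate r) hk hJK
      refine ⟨a, b, h1, h2, ?_, by simpa using h3⟩
      intro x hx i hi
      obtain rfl : i = 0 := by omega
      exact h2 hx
    | succ k ih =>
      obtain ⟨a, b, h1, h2, h3, h4⟩ := ih
      obtain ⟨a', b', h1', h2', h3'⟩ := exists_sub hg h1 (h2.trans hJJ)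
      refine ⟨a', b', h1', h2', ?_, ?_⟩
      · intro x hx i hi
        cases i with
        | zero => exact h2' hx
        | succ i =>
          rw [iterate_succ_apply]
          exact h3 _ (h3' ▸ mem_image_of_mem g hx) i (by omega)
      · rw [show k + 1 + r = (k + r) + 1 by ring, iterate_succ, image_comp, h3', h4]
  obtain ⟨a, b, h1, h2, h3, h4⟩ := step k
  obtain ⟨a', b', h1', h2', h3'⟩ := exists_sub hg h1 (h2.trans hKJ)
  have h5 : g^[1 + k + r] '' Icc a' b' = Icc k1 k2 := by
    rw [show 1 + k + r = (k + r) + 1 by ring, iterate_succ, image_comp, h3', h4]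
  obtain ⟨u, hu, huk⟩ : k1 ∈ g^[1 + k + r] '' Icc a' b' := h5 ▸ ⟨le_rfl, hk⟩
  obtain ⟨w, hw, hwk⟩ : k2 ∈ g^[1 + k + r] '' Icc a' b' := h5 ▸ ⟨hk, le_rfl⟩
  have hu' := h2' hu
  have hw' := h2' hw
  have hfix : ∃ x ∈ Icc a' b', g^[1 + k + r] x = x := by
    rcases le_total u w with huw | huw
    · obtain ⟨x, hx, hxx⟩ := exists_eq_fix (hg.iterate (1 + k + r)) huw
        (Or.inr ⟨huk ▸ hu'.1, hwk ▸ hw'.2⟩)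
      exact ⟨x, ⟨hu.1.trans hx.1, hx.2.trans hw.2⟩, hxx⟩
    · obtain ⟨x, hx, hxx⟩ := exists_eq_fix (hg.iterate (1 + k + r)) huw
        (Or.inl ⟨hwk ▸ hw'.2, huk ▸ hu'.1⟩)
      exact ⟨x, ⟨hw.1.trans hx.1, hx.2.trans hu.2⟩, hxx⟩
  obtain ⟨x, hx, hxx⟩ := hfix
  refine ⟨x, h2' hx, ?_, hxx⟩
  intro i hi1 hi2
  obtain ⟨j, rfl⟩ : ∃ j, i = j + 1 := ⟨i - 1, by omega⟩
  rw [iterate_succ_apply]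
  exact h3 _ (h3' ▸ mem_image_of_mem g hx) j (by omega)

lemma exists_pq {f : ℝ → ℝ} {x : ℝ} {m : ℕ} (hm : 2 ≤ m) (hx : minimalPeriod f x = m) :
    ∃ p q, minimalPeriod f p = m ∧ p < q ∧ q ≤ f p ∧ f q ≤ p ∧
      (∀ i, f^[i] p ≤ p ∨ q ≤ f^[i] p) ∧ (∃ j, f^[j] p = q) := by
  classical
  have hper : IsPeriodicPt f m x := hx ▸ isPeriodicPt_minimalPeriod f x
  have hxp : x ∈ periodicPts f := mk_mem_periodicPts (by omega) hper
  set S : Finset ℝ := (Finset.range m).image (fun i => f^[i] x) with hS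
  have memS : ∀ i, f^[i] x ∈ S := by
    intro i
    rw [← hper.iterate_mod_apply]
    exact Finset.mem_image.2 ⟨i % m, Finset.mem_range.2 (Nat.mod_lt _ (by omega)), rfl⟩
  have Sex : ∀ y ∈ S, ∃ i, f^[i] x = y := by
    intro y hy
    obtain ⟨i, -, h⟩ := Finset.mem_image.1 hy
    exact ⟨i, h⟩
  have Sper : ∀ y ∈ S, minimalPeriod f y = m := by
    intro y hy
    obtain ⟨i, rfl⟩ := Sex y hy
    rw [minimalPeriod_apply_iterate hxp, hx]
  have Sf : ∀ y ∈ S, f y ∈ S := by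
    intro y hy
    obtain ⟨i, rfl⟩ := Sex y hy
    rw [← iterate_succ_apply' f]
    exact memS _
  have Sne : ∀ y ∈ S, f y ≠ y := by
    intro y hy h
    have : minimalPeriod f y = 1 := minimalPeriod_eq_one_iff_isFixedPt.2 h
    rw [Sper y hy] at this
    omega
  have Snon : S.Nonempty := ⟨x, memS 0⟩
  have hU : (S.filter (fun y => y < f y)).Nonempty := by
    refine ⟨S.min' Snon, Finset.mem_filter.2 ⟨S.min'_mem _, ?_⟩⟩
    exact lt_of_le_of_ne (S.min'_le _ (Sf _ (S.min'_mem _))) (Sne _ (S.min'_mem _)).symm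
  obtain ⟨p, hp, hpmax⟩ := Finset.exists_max_image _ id hU
  rw [Finset.mem_filter] at hp
  have hV : (S.filter (fun y => p < y)).Nonempty := ⟨f p, Finset.mem_filter.2 ⟨Sf _ hp.1, hp.2⟩⟩
  obtain ⟨q, hq, hqmin⟩ := Finset.exists_min_image _ id hV
  rw [Finset.mem_filter] at hq
  simp only [Finset.mem_filter, id, and_imp] at hpmax hqmin
  have hfq : f q < q := by
    refine lt_of_le_of_ne ?_ (Sne q hq.1)
    by_contra h
    exact absurd (hpmax q hq.1 (not_le.1 h)) (not_le.2 hq.2)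
  obtain ⟨i, hi⟩ := Sex p hp.1
  obtain ⟨j, hj⟩ := Sex q hq.1
  have key : ∀ l, f^[l] p ∈ S := by
    intro l
    rw [← hi, ← iterate_add_apply]
    exact memS _
  refine ⟨p, q, Sper p hp.1, hq.2, hqmin _ (Sf _ hp.1) hp.2, ?_, ?_, ?_⟩
  · by_contra h
    exact absurd (hqmin _ (Sf _ hq.1) (not_le.1 h)) (not_le.2 hfq)
  · intro l
    by_contra! h
    exact absurd (hqmin _ (key l) h.1) (not_le.2 h.2)
  · refine ⟨j + (i * m - i), ?_⟩
    have h1 : i ≤ i * m := Nat.le_mul_of_pos_right i (by omega)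
    rw [← hi, ← iterate_add_apply, show j + (i * m - i) + i = j + i * m by omega,
      iterate_add_apply, mul_comm, (hper.mul_const i).eq, hj]

lemma period_two {f : ℝ → ℝ} (hf : Continuous f) {x : ℝ} {m : ℕ} (hm : 2 ≤ m)
    (hx : minimalPeriod f x = m) : ∃ y, minimalPeriod f y = 2 := by
  obtain ⟨p, q, hp, hpq, hfp, hfq, -, -⟩ := exists_pq hm hx
  -- the point v
  obtain ⟨v, hv, hvq⟩ := intermediate_value_Icc' hpq.le hf.continuousOn
    (show q ∈ _ from ⟨hfq.trans hpq.le, hfp⟩)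
  have hvlt : v < f v := by
    rw [hvq]
    refine lt_of_le_of_ne hv.2 ?_
    rintro rfl
    linarith
  have hv2 : f (f v) ≤ v := by rw [hvq]; exact hfq.trans hv.1
  -- a point a
  obtain ⟨a, hav, ha⟩ : ∃ a ≤ v, a ≤ f (f a) := by
    have hper : IsPeriodicPt f m p := hp ▸ isPeriodicPt_minimalPeriod f p
    obtain ⟨i, hi, hmin⟩ := Finset.exists_min_image (Finset.range m) (fun i => f^[i] p)
      ⟨0, by simp; omega⟩
    have hall : ∀ j, f^[i] p ≤ f^[j] p := by
      intro j
      rw [← hper.iterate_mod_apply j]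
      exact hmin _ (Finset.mem_range.2 (Nat.mod_lt _ (by omega)))
    refine ⟨f^[i] p, (hall 0).trans hv.1, ?_⟩
    rw [← iterate_succ_apply' f, ← iterate_succ_apply' f]
    exact hall _
  have hf2 : Continuous (fun x => f (f x)) := hf.comp hf
  obtain ⟨y, hy1, hy2⟩ : ∃ y, f (f y) = y ∧ y < f y := by
    by_cases hS : ∀ x ∈ Icc a v, x < f x
    · obtain ⟨y, hy, hyy⟩ := exists_eq_fix hf2 hav (Or.inl ⟨ha, hv2⟩)
      exact ⟨y, hyy, hS y hy⟩
    · push Not at hS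
      obtain ⟨s, hs, hfs⟩ := hS
      obtain ⟨z, hz, hzz, hz'⟩ := exists_greatest (g := fun x => f x - x) (by fun_prop) (c := 0) hs.2
        (by simpa using hfs) (by simpa using hvlt.le)
      have hfz : f z = z := by linarith
      obtain ⟨w, hw, hwv⟩ := intermediate_value_Icc hz.2 hf.continuousOn
        (show v ∈ _ from ⟨hfz.le.trans hz.2, hvlt.le⟩)
      have hzv : z < v := by
        refine lt_of_le_of_ne hz.2 ?_
        rintro rfl
        linarith
      have hzw : z < w := by
        refine lt_of_le_of_ne hw.1 ?_
        rintro rfl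
        linarith
      obtain ⟨y, hy, hyy⟩ := exists_eq_fix hf2 hw.2 (Or.inl ⟨by simp only [hwv]; linarith [hw.2], hv2⟩)
      have := hz' y ⟨hzw.trans_le hy.1, hy.2⟩
      exact ⟨y, hyy, by simpa using this⟩
  refine ⟨y, ?_⟩
  have : Fact (Nat.Prime 2) := ⟨Nat.prime_two⟩
  exact minimalPeriod_eq_prime (p := 2) hy1 (fun h => hy2.ne' h)

lemma odd_next {f : ℝ → ℝ} (hf : Continuous f) {x : ℝ} {m : ℕ} (hm : 3 ≤ m) (hodd : Odd m)
    (hx : minimalPeriod f x = m)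
    (hmin : ∀ d, Odd d → 1 < d → (∃ y, minimalPeriod f y = d) → m ≤ d)
    {n : ℕ} (hn : Odd n) (hmn : m < n) : ∃ y, minimalPeriod f y = n := by
  obtain ⟨p, q, hp, hpq, hfp, hfq, hsplit, j, hj⟩ := exists_pq (by omega) hx
  have hper : IsPeriodicPt f m p := hp ▸ isPeriodicPt_minimalPeriod f p
  have hpp : p ∈ periodicPts f := mk_mem_periodicPts (by omega) hper
  have hq : minimalPeriod f q = m := by rw [← hj, minimalPeriod_apply_iterate hpp, hp]
  have hJJ : Icc p q ⊆ f '' Icc p q := fun t ht =>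
    intermediate_value_Icc' hpq.le hf.continuousOn ⟨hfq.trans ht.1, ht.2.trans hfp⟩
  have hmono : Monotone (fun i => f^[i] '' Icc p q) := by
    apply monotone_nat_of_le_succ
    intro i
    simp only [iterate_succ, image_comp]
    exact image_mono hJJ
  have hpim : ∀ i, f^[i] p ∈ f^[m-1] '' Icc p q := by
    intro i
    rw [← hper.iterate_mod_apply]
    have : i % m ≤ m - 1 := by have := Nat.mod_lt i (show 0 < m by omega); omega
    exact hmono this (mem_image_of_mem _ ⟨le_rfl, hpq.le⟩)
  have hord : OrdConnected (f^[m-1] '' Icc p q) :=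
    (isPreconnected_Icc.image _ (hf.iterate _).continuousOn).ordConnected
  have hne2 : ∀ y, minimalPeriod f y = m → f (f y) ≠ y := by
    intro y hy h
    have h2 : IsPeriodicPt f 2 y := h
    have := Nat.le_of_dvd (by norm_num) h2.minimalPeriod_dvd
    omega
  -- the interval K
  obtain ⟨k1, k2, hk, hKJ, hJK, hdisj⟩ : ∃ k1 k2, k1 ≤ k2 ∧ Icc p q ⊆ f '' Icc k1 k2 ∧
      Icc k1 k2 ⊆ f^[m-1] '' Icc p q ∧ ∀ y ∈ Icc k1 k2, y ∈ Icc p q → y = p ∨ y = q := by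
    by_cases h1 : ∃ i, f^[i] p ≤ p ∧ f^[i+1] p ≤ p
    · obtain ⟨i, h2, h3⟩ := h1
      rw [iterate_succ_apply'] at h3
      refine ⟨f^[i] p, p, h2, ?_, hord.out (hpim i) (hpim 0), fun y hy hy' => Or.inl (le_antisymm hy.2 hy'.1)⟩
      exact fun t ht => intermediate_value_Icc h2 hf.continuousOn ⟨h3.trans ht.1, ht.2.trans hfp⟩
    by_cases h1' : ∃ i, q ≤ f^[i] p ∧ q ≤ f^[i+1] p
    · obtain ⟨i, h2, h3⟩ := h1'
      rw [iterate_succ_apply'] at h3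
      refine ⟨q, f^[i] p, h2, ?_, hord.out (hj ▸ hpim j) (hpim i), fun y hy hy' => Or.inr (le_antisymm hy'.2 hy.1)⟩
      exact fun t ht => intermediate_value_Icc h2 hf.continuousOn ⟨hfq.trans ht.1, ht.2.trans h3⟩
    exfalso
    push Not at h1 h1'
    have halt : ∀ i, f^[2*i] p ≤ p := by
      intro i
      induction i with
      | zero => simp
      | succ i ih =>
        have h3 := h1 _ ih
        have h4 : q ≤ f^[2*i+1] p := (hsplit _).resolve_left (not_le.2 h3)
        have h5 := h1' _ h4
        exact (hsplit (2*i+1+1)).resolve_right (not_le.2 h5)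
    obtain ⟨l, hl⟩ := hodd
    have h3 := h1 _ (halt l)
    rw [← hl, hper.eq] at h3
    exact lt_irrefl _ h3
  obtain ⟨y, hyK, hyJ, hyn⟩ := loop_lemma hf hk (m-1) hJJ hKJ hJK (n - m)
  rw [show 1 + (n - m) + (m - 1) = n by omega] at hyn
  refine ⟨y, ?_⟩
  have hyper : IsPeriodicPt f n y := hyn
  have hdvd := hyper.minimalPeriod_dvd
  obtain ⟨c, hc⟩ := hdvd
  set D := minimalPeriod f y with hD
  by_contra hne
  have hDodd : Odd D := Nat.Odd.of_mul_left (hc ▸ hn)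
  have hcodd : Odd c := Nat.Odd.of_mul_right (hc ▸ hn)
  have hc3 : 3 ≤ c := by
    obtain ⟨e, he⟩ := hcodd
    rcases Nat.eq_zero_or_pos e with h | h
    · subst h; simp at he; subst he; omega
    · omega
  have hD3 : D * 3 ≤ n := hc ▸ Nat.mul_le_mul_left D hc3
  have hDle : D ≤ n - m + 1 := by
    have hDpos := hDodd.pos
    rcases Nat.lt_or_ge 1 D with h | h
    · have := hmin D hDodd h ⟨y, rfl⟩
      omega
    · omega
  have hyJ0 : y ∈ Icc p q := by
    have := hyJ D hDodd.pos hDle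
    rwa [hD, iterate_minimalPeriod] at this
  have e1 := hyJ 1 le_rfl (by omega)
  have e2 := hyJ 2 (by omega) (by omega)
  simp only [iterate_succ, iterate_zero, comp, id] at e1 e2
  rcases hdisj y hyK hyJ0 with h | h
  · have e3 : f p = q := le_antisymm (h ▸ e1.2) hfp
    apply hne2 p hp
    rw [h, e3] at e2
    rw [e3]
    exact le_antisymm hfq e2.1
  · have e3 : f q = p := le_antisymm hfq (h ▸ e1.1)
    apply hne2 q hq
    rw [h, e3] at e2
    rw [e3]
    exact le_antisymm e2.2 hfp

lemma odd_forces_odd {f : ℝ → ℝ} (hf : Continuous f) {x : ℝ} {m : ℕ} (hm : 3 ≤ m) (hodd : Odd m)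
    (hx : minimalPeriod f x = m)
    {n : ℕ} (hn : Odd n) (hmn : m < n) : ∃ y, minimalPeriod f y = n := by
  classical
  have hex : ∃ d, Odd d ∧ 1 < d ∧ ∃ y, minimalPeriod f y = d := ⟨m, hodd, by omega, x, hx⟩
  obtain ⟨h1, h2, y, hy⟩ := Nat.find_spec hex
  have hle : Nat.find hex ≤ m := Nat.find_min' hex ⟨hodd, by omega, x, hx⟩
  refine odd_next hf ?_ h1 hy (fun d hd1 hd2 hd3 => Nat.find_min' hex ⟨hd1, hd2, hd3⟩) hn (by omega)
  obtain ⟨e, he⟩ := h1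
  omega

lemma odd_forces_even {f : ℝ → ℝ} (hf : Continuous f) {x : ℝ} {m : ℕ} (hm : 3 ≤ m) (hodd : Odd m)
    (hx : minimalPeriod f x = m) {n : ℕ} (hn : 1 ≤ n) : ∃ y, minimalPeriod f y = 2 * n := by
  rcases Nat.lt_or_ge 1 n with hn2 | hn1
  swap
  · obtain rfl : n = 1 := by omega
    exact period_two hf (by omega) hx
  obtain ⟨p, q, hp, hpq, hfp, hfq, hsplit, j, hj⟩ := exists_pq (by omega) hx
  have hper : IsPeriodicPt f m p := hp ▸ isPeriodicPt_minimalPeriod f p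
  set g : ℝ → ℝ := fun x => f (f x) with hgdef
  have hg : Continuous g := hf.comp hf
  have hgit : ∀ i, g^[i] = f^[2*i] := by
    intro i
    rw [iterate_mul]; rfl
  -- every orbit point is hit by the iterates of g
  have hgorb : ∀ i, ∃ l, ∀ k, g^[l] (f^[k] p) = f^[i + k] p := by
    intro i
    rcases Nat.even_or_odd' i with ⟨l, h | h⟩
    · refine ⟨l, fun k => ?_⟩
      rw [hgit, ← iterate_add_apply, h]
    · obtain ⟨c, hc⟩ := hodd
      refine ⟨l + c + 1, fun k => ?_⟩
      rw [hgit, ← iterate_add_apply, show 2 * (l + c + 1) + k = (i + k) + m by omega,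
        iterate_add_apply, hper.eq]
  have hinv : ∀ (s : Set ℝ), (∀ y ∈ s, g y ∈ s) → ∀ k, f^[k] p ∈ s → ∀ i, f^[i] p ∈ s := by
    intro s hs k hk i
    have hit : ∀ l, ∀ y ∈ s, g^[l] y ∈ s := by
      intro l
      induction l with
      | zero => intro y hy; exact hy
      | succ l ih => intro y hy; rw [iterate_succ_apply]; exact ih _ (hs y hy)
    have hkm : k ≤ k * m := Nat.le_mul_of_pos_right k (by omega)
    obtain ⟨l, hl⟩ := hgorb (i + (k * m - k))
    have := hit l _ hk
    rw [hl, show i + (k * m - k) + k = i + m * k by rw [mul_comm m k]; omega, iterate_add_apply,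
      (hper.mul_const k).eq] at this
    exact this
  -- v
  obtain ⟨v, hv, hvq⟩ := intermediate_value_Icc' hpq.le hf.continuousOn
    (show q ∈ _ from ⟨hfq.trans hpq.le, hfp⟩)
  have hvlt : v < q := by
    refine lt_of_le_of_ne hv.2 ?_
    rintro rfl
    linarith
  have hgvp : g v ≤ p := by simp only [hgdef, hvq]; exact hfq
  have hgv : g v < v := by
    refine lt_of_le_of_ne (hgvp.trans hv.1) ?_
    intro h
    have h1 : v = p := le_antisymm (h ▸ hgvp) hv.1
    rw [h1] at h
    have h2 : IsPeriodicPt f 2 p := h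
    have := Nat.le_of_dvd (by norm_num) h2.minimalPeriod_dvd
    omega
  -- z
  obtain ⟨z, hz, hfz⟩ := exists_eq_fix hf hvlt.le (Or.inl ⟨by linarith, by linarith⟩)
  have hgz : g z = z := by simp only [hgdef, hfz]
  have hzq : z < q := by
    refine lt_of_le_of_ne hz.2 ?_
    rintro rfl
    linarith
  -- z0
  obtain ⟨z0, hz0, hgz0', hz0'⟩ := exists_least (g := fun x => g x - x) (by fun_prop) (c := 0) hz.1
    (by simpa using hgv.le) (by simp [hgz])
  have hgz0 : g z0 = z0 := by linarith
  have hvz0 : v < z0 := by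
    refine lt_of_le_of_ne hz0.1 ?_
    intro h
    rw [h] at hgv
    linarith
  have hgless : ∀ y ∈ Ico v z0, g y < y := by
    intro y hy
    have := hz0' y hy
    linarith
  -- minimum of the orbit
  obtain ⟨i0, hall⟩ : ∃ i, ∀ j, f^[i] p ≤ f^[j] p := by
    obtain ⟨i, hi, hmin⟩ := Finset.exists_min_image (Finset.range m) (fun i => f^[i] p)
      ⟨0, by simp; omega⟩
    refine ⟨i, fun j => ?_⟩
    rw [← hper.iterate_mod_apply j]
    exact hmin _ (Finset.mem_range.2 (Nat.mod_lt _ (by omega)))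
  obtain ⟨d', hd'v, hd'⟩ : ∃ d' < z0, z0 ≤ g d' := by
    by_contra! hcon
    have := hinv (Iio z0) (fun y hy => hcon y hy) 0 (hv.1.trans_lt hvz0) j
    rw [hj] at this
    have h3 : q < z0 := this
    linarith [hz0.2]
  have hd'v : d' ≤ v := by
    by_contra! h
    have := hgless d' ⟨h.le, hd'v⟩
    linarith
  obtain ⟨d, hd, hgd', hd2⟩ := exists_greatest (g := fun x => - g x) (by fun_prop) (c := - z0) hd'v
    (by simpa using hd') (by simp; linarith)
  have hgd : g d = z0 := by linarith
  have hdv : d < v := by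
    refine lt_of_le_of_ne hd.2 ?_
    rintro rfl
    linarith
  have hgz0lt : ∀ y ∈ Ioo d z0, g y < z0 := by
    intro y hy
    rcases le_total y v with h | h
    · have := hd2 y ⟨hy.1, h⟩
      linarith
    · exact (hgless y ⟨h, hy.2⟩).trans hy.2
  have hfz' : ∀ y ∈ Ioo d z0, z < f y := by
    intro y hy
    by_contra! hcon
    have hcont : ContinuousOn f (uIcc y v) := hf.continuousOn
    obtain ⟨w, hw, hwz⟩ := intermediate_value_uIcc hcont
      (show z ∈ uIcc (f y) (f v) by
        rw [mem_uIcc]; left; exact ⟨hcon, by rw [hvq]; exact hzq.le⟩)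
    have hw' : w ∈ Ioo d z0 := by
      rw [mem_uIcc] at hw
      rcases hw with hw | hw
      · exact ⟨hy.1.trans_le hw.1, hw.2.trans_lt hvz0⟩
      · exact ⟨hdv.trans_le hw.1, hw.2.trans_lt hy.2⟩
    have := hgz0lt w hw'
    simp only [hgdef, hwz, hfz] at this
    linarith [hz0.2]
  -- t
  obtain ⟨t, ht, hgt⟩ : ∃ t ∈ Ioo d z0, g t ≤ d := by
    rcases le_or_gt p d with h | h
    · exact ⟨v, ⟨hdv, hvz0⟩, hgvp.trans h⟩
    · by_contra! hcon
      have := hinv (Ioo d z0) (fun y hy => ⟨hcon y hy, hgz0lt y hy⟩) 0 ⟨h, hv.1.trans_lt hvz0⟩ j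
      rw [hj] at this
      linarith [hz0.2, this.2]
  have hdz : d < z0 := ht.1.trans ht.2
  have cov1 : Icc t z0 ⊆ g '' Icc t z0 := fun y hy =>
    intermediate_value_Icc ht.2.le hg.continuousOn ⟨by linarith [hy.1, ht.1], by rw [hgz0]; exact hy.2⟩
  have cov2 : Icc t z0 ⊆ g '' Icc d t := fun y hy =>
    intermediate_value_Icc' ht.1.le hg.continuousOn ⟨by linarith [hy.1, ht.1], by rw [hgd]; exact hy.2⟩
  have cov3 : Icc d t ⊆ g^[1] '' Icc t z0 := fun y hy =>
    intermediate_value_Icc ht.2.le hg.continuousOn ⟨hgt.trans hy.1, by rw [hgz0]; linarith [hy.2, ht.2]⟩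
  obtain ⟨y, hyK, hyJ, hyn⟩ := loop_lemma hg ht.1.le 1 cov1 cov2 cov3 (n - 2)
  rw [show 1 + (n - 2) + 1 = n by omega] at hyn
  have hyper : IsPeriodicPt g n y := hyn
  have hyI : ∀ i, g^[i] y ∈ Icc d z0 := by
    intro i
    rw [← hyper.iterate_mod_apply]
    have hlt : i % n < n := Nat.mod_lt _ (by omega)
    rcases Nat.eq_zero_or_pos (i % n) with h | h
    · rw [h]; exact ⟨hyK.1, hyK.2.trans ht.2.le⟩
    · have := hyJ (i % n) h (by omega)
      exact ⟨ht.1.le.trans this.1, this.2⟩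
  have hyz0 : ∀ i, g^[i] y ≠ z0 := by
    intro i h
    have hfix : ∀ l, g^[l] z0 = z0 := fun l => iterate_fixed hgz0 l
    have h1 : i ≤ n * i := Nat.le_mul_of_pos_left i (by omega)
    have h2 : g^[n * i] y = y := (hyper.mul_const i).eq
    rw [show n * i = (n * i - i) + i by omega, iterate_add_apply, h, hfix] at h2
    linarith [hyK.2, ht.2]
  have hyO : ∀ i, g^[i] y ∈ Ioo d z0 := by
    intro i
    refine ⟨lt_of_le_of_ne (hyI i).1 ?_, lt_of_le_of_ne (hyI i).2 (hyz0 i)⟩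
    intro h
    apply hyz0 (i + 1)
    rw [iterate_succ_apply', ← h, hgd]
  refine ⟨y, ?_⟩
  have hper2 : IsPeriodicPt f (2 * n) y := by
    have := hyn
    rw [hgit] at this
    exact this
  have hdvd := hper2.minimalPeriod_dvd
  have hDpos : 0 < minimalPeriod f y := hper2.minimalPeriod_pos (by omega)
  have hit := iterate_minimalPeriod (f := f) (x := y)
  rcases Nat.even_or_odd' (minimalPeriod f y) with ⟨k, h | h⟩
  · rw [h] at hdvd hit ⊢
    have hkn : k ∣ n := Nat.dvd_of_mul_dvd_mul_left (by norm_num) hdvd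
    have hkle := Nat.le_of_dvd (by omega) hkn
    rcases Nat.lt_or_ge k n with hlt | hge
    · exfalso
      have h1 := hyJ k (by omega) (by omega)
      rw [hgit, hit] at h1
      have h2 : y = t := le_antisymm hyK.2 h1.1
      have h3 := (hyO 1).1
      rw [h2] at h3
      exact absurd hgt (not_le.2 h3)
    · rw [le_antisymm hkle hge]
  · exfalso
    rw [h, iterate_succ_apply', ← hgit] at hit
    have h1 := hfz' _ (hyO k)
    rw [hit] at h1
    linarith [hyK.2, ht.2, hz0.2]

lemma lift_even {f : ℝ → ℝ} {i k : ℕ} (hk : Even k) (hk0 : 0 < k)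
    (h : ∃ x, minimalPeriod (f^[2^i]) x = k) : ∃ x, minimalPeriod f x = 2^i * k := by
  obtain ⟨x, hx⟩ := h
  refine ⟨x, ?_⟩
  rw [minimalPeriod_iterate_eq_div_gcd (by positivity)] at hx
  obtain ⟨j, hj, hg⟩ := (Nat.dvd_prime_pow Nat.prime_two).1 (Nat.gcd_dvd_right (minimalPeriod f x) (2^i))
  rw [hg] at hx
  have hd : 2^j ∣ minimalPeriod f x := hg ▸ Nat.gcd_dvd_left _ _
  have he : minimalPeriod f x = 2^j * k := by rw [← hx, Nat.mul_div_cancel' hd]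
  rcases eq_or_lt_of_le hj with h | h
  · rw [he, h]
  · exfalso
    obtain ⟨l, hl⟩ := hk.two_dvd
    have h1 : 2^(j+1) ∣ Nat.gcd (minimalPeriod f x) (2^i) := by
      apply Nat.dvd_gcd
      · rw [he, hl]; exact ⟨l, by ring⟩
      · exact pow_dvd_pow 2 h
    rw [hg] at h1
    have := Nat.le_of_dvd (by positivity) h1
    rw [pow_succ] at this
    have : 0 < 2^j := by positivity
    omega

lemma lift_odd {f : ℝ → ℝ} {i k : ℕ}
    (h : ∃ x, minimalPeriod (f^[2^i]) x = k) : ∃ j ≤ i, ∃ x, minimalPeriod f x = 2^j * k := by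
  obtain ⟨x, hx⟩ := h
  rw [minimalPeriod_iterate_eq_div_gcd (by positivity)] at hx
  obtain ⟨j, hj, hg⟩ := (Nat.dvd_prime_pow Nat.prime_two).1 (Nat.gcd_dvd_right (minimalPeriod f x) (2^i))
  rw [hg] at hx
  have hd : 2^j ∣ minimalPeriod f x := hg ▸ Nat.gcd_dvd_left _ _
  exact ⟨j, hj, x, by rw [← hx, Nat.mul_div_cancel' hd]⟩

lemma lower {f : ℝ → ℝ} {i k : ℕ} (hk : 0 < k)
    (h : ∃ x, minimalPeriod f x = 2^i * k) : ∃ x, minimalPeriod (f^[2^i]) x = k := by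
  obtain ⟨x, hx⟩ := h
  refine ⟨x, ?_⟩
  rw [minimalPeriod_iterate_eq_div_gcd (by positivity), hx, Nat.gcd_mul_right_left]
  exact Nat.mul_div_cancel_left k (by positivity)

lemma force_even {f : ℝ → ℝ} (hf : Continuous f) {i k m m' : ℕ} (hm : 3 ≤ m) (hodd : Odd m)
    (h : ∃ x, minimalPeriod f x = 2^i * m) (hik : i < k) (hm' : 0 < m') :
    ∃ x, minimalPeriod f x = 2^k * m' := by
  obtain ⟨x, hx⟩ := lower (by omega) h
  obtain ⟨l, rfl⟩ : ∃ l, k = i + l + 1 := ⟨k - i - 1, by omega⟩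
  have h1 := odd_forces_even (hf.iterate (2^i)) hm hodd hx (n := 2^l * m') (Nat.mul_pos (by positivity) hm')
  have h2 := lift_even (even_two_mul _) (by positivity) h1
  rwa [show 2^i * (2 * (2^l * m')) = 2^(i+l+1) * m' by ring] at h2

lemma force_odd {f : ℝ → ℝ} (hf : Continuous f) {i m m' : ℕ} (hm : 3 ≤ m) (hodd : Odd m)
    (h : ∃ x, minimalPeriod f x = 2^i * m) (hmm : m < m') (hm' : Odd m') :
    ∃ x, minimalPeriod f x = 2^i * m' := by
  obtain ⟨x, hx⟩ := lower (by omega) h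
  obtain ⟨j, hj, h1⟩ := lift_odd (odd_forces_odd (hf.iterate (2^i)) hm hodd hx hm' hmm)
  rcases eq_or_lt_of_le hj with rfl | hlt
  · exact h1
  · exact force_even hf (by omega) hm' h1 hlt (by omega)

lemma force_pow {f : ℝ → ℝ} (hf : Continuous f) {i k m : ℕ} (hm : 0 < m)
    (h : ∃ x, minimalPeriod f x = 2^i * m) (hki : k ≤ i) :
    ∃ x, minimalPeriod f x = 2^k := by
  cases k with
  | zero =>
    obtain ⟨x, hx⟩ := h
    rcases Nat.lt_or_ge 1 (2^i * m) with h1 | h1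
    · obtain ⟨p, q, -, hpq, h2, h3, -⟩ := exists_pq h1 hx
      obtain ⟨z, -, hz⟩ := exists_eq_fix hf hpq.le (Or.inl ⟨by linarith, by linarith⟩)
      exact ⟨z, minimalPeriod_eq_one_iff_isFixedPt.2 hz⟩
    · have : 0 < 2^i * m := by positivity
      exact ⟨x, by rw [hx, pow_zero]; omega⟩
  | succ k =>
    obtain ⟨l, rfl⟩ : ∃ l, i = k + l + 1 := ⟨i - k - 1, by omega⟩
    rw [show 2^(k+l+1) * m = 2^k * (2 * (2^l * m)) by ring] at h
    obtain ⟨x, hx⟩ := lower (by positivity) h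
    have : 0 < 2^l * m := by positivity
    have h2 := lift_even even_two (by norm_num) (period_two (hf.iterate (2^k)) (by omega) hx)
    rwa [← pow_succ] at h2

lemma oddPart_eq {n : ℕ} : 2^(n.factorization 2) * oddPart n = n :=
  Nat.ordProj_mul_ordCompl_eq_self n 2

lemma oddPart_odd {n : ℕ} (hn : 0 < n) : Odd (oddPart n) := by
  have := Nat.not_dvd_ordCompl Nat.prime_two hn.ne'
  rw [← Nat.not_even_iff_odd, even_iff_two_dvd]
  exact this

lemma oddPart_pow (k : ℕ) : oddPart (2^k) = 1 := by
  unfold oddPart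
  simp [Nat.Prime.factorization_pow Nat.prime_two]

lemma oddPart_zero : oddPart 0 = 0 := by simp [oddPart]

lemma force {f : ℝ → ℝ} (hf : Continuous f) {m n : ℕ} (hn : 0 < n)
    (h : ∃ x, minimalPeriod f x = n) (hmn : SharkLt m n) :
    0 < m ∧ ∃ x, minimalPeriod f x = m := by
  have hm : 0 < m := by
    rcases Nat.eq_zero_or_pos m with rfl | h
    · simp [SharkLt, oddPart_zero] at hmn
    · exact h
  refine ⟨hm, ?_⟩
  have hno := oddPart_odd hn
  have hmo := oddPart_odd hm
  have hn3 : oddPart n ≠ 1 → 3 ≤ oddPart n := by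
    intro h1
    obtain ⟨e, he⟩ := hno
    omega
  have en := @oddPart_eq n
  have em := @oddPart_eq m
  rw [← en] at h
  rw [← em]
  rcases hmn with ⟨h1, h2, h3⟩ | ⟨h1, h2⟩ | ⟨h1, h2, h3 | ⟨h3, h4⟩⟩
  · rw [h1, mul_one]
    refine force_pow hf hno.pos h ?_
    rw [← en, ← em, h1, h2, mul_one, mul_one] at h3
    exact ((Nat.pow_lt_pow_iff_right (by norm_num)).1 h3).le
  · rcases le_or_gt (m.factorization 2) (n.factorization 2) with h3 | h3
    · rw [h1, mul_one]
      exact force_pow hf hno.pos h h3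
    · exact force_even hf (hn3 h2) hno h h3 hmo.pos
  · exact force_even hf (hn3 h2) hno h h3 hmo.pos
  · rw [h3]
    exact force_odd hf (hn3 h2) hno h h4 hmo

lemma segment_of_closed (P : Set ℕ) (hpos : ∀ n ∈ P, 0 < n) (hne : P.Nonempty)
    (hcl : ∀ n ∈ P, ∀ m, SharkLt m n → m ∈ P) :
    (∃ n : ℕ, 0 < n ∧ P = sharkSegment n) ∨ P = {m : ℕ | ∃ k : ℕ, m = 2 ^ k} := by
  have mk : ∀ n ∈ P, (∀ m ∈ P, SharkLt m n ∨ m = n) → P = sharkSegment n := by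
    intro n hn h
    apply Subset.antisymm
    · exact fun m hm => h m hm
    · rintro m (hm | rfl)
      · exact hcl n hn m hm
      · exact hn
  by_cases h : ∃ n ∈ P, oddPart n ≠ 1
  · left
    obtain ⟨n0, hn0, hn0'⟩ := h
    have wf : WellFounded (Prod.Lex (· < ·) (· < ·) : ℕ × ℕ → ℕ × ℕ → Prop) :=
      WellFounded.prod_lex Nat.lt_wfRel.wf Nat.lt_wfRel.wf
    obtain ⟨n, ⟨hn, hn'⟩, hmin⟩ := (InvImage.wf (fun n : ℕ => (n.factorization 2, oddPart n)) wf).has_min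
      {n | n ∈ P ∧ oddPart n ≠ 1} ⟨n0, hn0, hn0'⟩
    refine ⟨n, hpos n hn, mk n hn ?_⟩
    intro m hm
    by_cases h1 : oddPart m = 1
    · exact Or.inl (Or.inr (Or.inl ⟨h1, hn'⟩))
    have h2 := hmin m ⟨hm, h1⟩
    simp only [InvImage, Prod.lex_def, not_or, not_and, not_lt] at h2
    rcases eq_or_lt_of_le h2.1 with h3 | h3
    · rcases eq_or_lt_of_le (h2.2 h3.symm) with h4 | h4
      · right
        rw [← @oddPart_eq m, ← @oddPart_eq n, h3, h4]
      · exact Or.inl (Or.inr (Or.inr ⟨h1, hn', Or.inr ⟨h3.symm, h4⟩⟩))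
    · exact Or.inl (Or.inr (Or.inr ⟨h1, hn', Or.inl h3⟩))
  · push Not at h
    by_cases hb : BddAbove P
    · left
      have hn := Nat.sSup_mem hne hb
      refine ⟨sSup P, hpos _ hn, mk _ hn ?_⟩
      intro m hm
      rcases eq_or_lt_of_le (le_csSup hb hm) with h1 | h1
      · exact Or.inr h1
      · exact Or.inl (Or.inl ⟨h m hm, h _ hn, h1⟩)
    · right
      apply Subset.antisymm
      · intro m hm
        refine ⟨m.factorization 2, ?_⟩
        have := @oddPart_eq m
        rw [h m hm, mul_one] at this
        exact this.symm
      · rintro _ ⟨k, rfl⟩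
        rw [not_bddAbove_iff] at hb
        obtain ⟨n, hn, hlt⟩ := hb (2^k)
        exact hcl n hn _ (Or.inl ⟨oddPart_pow k, h n hn, hlt⟩)

lemma iterate_eq_of_eqOn {f g : ℝ → ℝ} {s : Set ℝ} (h : ∀ x ∈ s, g x = f x)
    (hs : MapsTo f s s) (i : ℕ) : ∀ x ∈ s, g^[i] x = f^[i] x := by
  induction i with
  | zero => intro x _; rfl
  | succ i ih =>
    intro x hx
    rw [iterate_succ_apply, iterate_succ_apply, h x hx, ih _ (hs hx)]

lemma minimalPeriod_eq_of_eqOn {f g : ℝ → ℝ} {s : Set ℝ} (h : ∀ x ∈ s, g x = f x)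
    (hs : MapsTo f s s) {x : ℝ} (hx : x ∈ s) : minimalPeriod g x = minimalPeriod f x := by
  rw [minimalPeriod_eq_minimalPeriod_iff]
  intro n
  simp only [IsPeriodicPt, IsFixedPt, iterate_eq_of_eqOn h hs n x hx]

end helpers

/-- **Sharkovsky's Theorem (first half).** For every continuous map `f` of a closed
interval into itself there is `n ∈ ℕ ∪ {2^∞}` with `P(f) = S(n)`. -/
theorem sharkovsky_forward (a b : ℝ) (hab : a ≤ b) (f : ℝ → ℝ)
    (hf : ContinuousOn f (Set.Icc a b))
    (hmaps : Set.MapsTo f (Set.Icc a b) (Set.Icc a b)) :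
    (∃ n : ℕ, 0 < n ∧ periodsOn f (Set.Icc a b) = sharkSegment n) ∨
      periodsOn f (Set.Icc a b) = {m : ℕ | ∃ k : ℕ, m = 2 ^ k} := by
  have hext : Continuous (Set.IccExtend hab ((Set.Icc a b).domRestrict f)) := hf.domRestrict.Icc_extend'
  set g : ℝ → ℝ := Set.IccExtend hab ((Set.Icc a b).domRestrict f) with hgdef
  have hgf : ∀ x ∈ Set.Icc a b, g x = f x := by
    intro x hx
    rw [hgdef, Set.IccExtend_of_mem hab _ hx]
    rfl
  have hgmem : ∀ x, g x ∈ Set.Icc a b := fun x => hmaps (Set.projIcc a b hab x).2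
  have hP : periodsOn f (Set.Icc a b) = {n | 0 < n ∧ ∃ x, Function.minimalPeriod g x = n} := by
    ext n
    constructor
    · rintro ⟨hn, x, hx, h⟩
      exact ⟨hn, x, by rw [minimalPeriod_eq_of_eqOn hgf hmaps hx, h]⟩
    · rintro ⟨hn, x, h⟩
      have hx : x ∈ Set.Icc a b := by
        have h1 := Function.iterate_minimalPeriod (f := g) (x := x)
        rw [h, show n = (n - 1) + 1 by omega, Function.iterate_succ_apply'] at h1
        rw [← h1]
        exact hgmem _
      exact ⟨hn, x, hx, by rw [← minimalPeriod_eq_of_eqOn hgf hmaps hx, h]⟩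
  rw [hP]
  apply segment_of_closed
  · exact fun n hn => hn.1
  · obtain ⟨z, -, hz⟩ := exists_eq_fix hext hab (Or.inl ⟨(hgmem a).1, (hgmem b).2⟩)
    exact ⟨1, one_pos, z, Function.minimalPeriod_eq_one_iff_isFixedPt.2 hz⟩
  · exact fun n hn m hm => force hext hn.1 hn.2 hm
end

section
/- Let f : ℝ → ℝ be a continuous map. Then the set P(f) of periods of all cycles of f is either empty or equal to the initial segment S(n) of the Sharkovsky ordering for some n in ℕ ∪ {2^∞}. -/
section
open Set Function

namespace Shark

def Per (f : ℝ → ℝ) (n : ℕ) : Prop := 0 < n ∧ ∃ x, minimalPeriod f x = n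

/-- The interval `[a,b]` covers `[a',b']` under `f`. -/
def Cov (f : ℝ → ℝ) (a b a' b' : ℝ) : Prop :=
  ∃ s ∈ Icc a b, ∃ t ∈ Icc a b, f s ≤ a' ∧ b' ≤ f t

lemma shrink_aux {f : ℝ → ℝ} (hf : Continuous f) {u v a b : ℝ} (huv : u ≤ v)
    (hu : f u = a) (hv : f v = b) (hab : a ≤ b) :
    ∃ c d, u ≤ c ∧ c ≤ d ∧ d ≤ v ∧ (∀ x ∈ Icc c d, f x ∈ Icc a b) ∧ f c = a ∧ f d = b := by
  have hS : IsCompact (Icc u v ∩ f ⁻¹' {b}) :=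
    isCompact_Icc.inter_right (isClosed_singleton.preimage hf)
  obtain ⟨d, ⟨hd1, hd2⟩, hd3⟩ := hS.exists_isLeast ⟨v, ⟨huv, le_rfl⟩, hv⟩
  have hT : IsCompact (Icc u d ∩ f ⁻¹' {a}) :=
    isCompact_Icc.inter_right (isClosed_singleton.preimage hf)
  obtain ⟨c, ⟨hc1, hc2⟩, hc3⟩ := hT.exists_isGreatest ⟨u, ⟨le_rfl, hd1.1⟩, hu⟩
  simp only [mem_preimage, mem_singleton_iff] at hd2 hc2
  refine ⟨c, d, hc1.1, hc1.2, hd1.2, ?_, hc2, hd2⟩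
  intro x hx
  constructor
  · by_contra h
    push Not at h
    obtain ⟨t, ht, hta⟩ := intermediate_value_Icc hx.2 hf.continuousOn
      (show a ∈ Icc (f x) (f d) from ⟨h.le, by rw [hd2]; exact hab⟩)
    have : t ≤ c := hc3 ⟨⟨hc1.1.trans (hx.1.trans ht.1), ht.2⟩, hta⟩
    have hxc : x = c := le_antisymm (ht.1.trans this) hx.1
    rw [hxc, hc2] at h
    exact lt_irrefl _ h
  · by_contra h
    push Not at h
    obtain ⟨t, ht, hta⟩ := intermediate_value_Icc hx.1 hf.continuousOn
      (show b ∈ Icc (f c) (f x) from ⟨by rw [hc2]; exact hab, h.le⟩)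
    have : d ≤ t := hd3 ⟨⟨hc1.1.trans ht.1, ht.2.trans (hx.2.trans hd1.2)⟩, hta⟩
    have hxd : x = d := le_antisymm hx.2 (this.trans ht.2)
    rw [hxd, hd2] at h
    exact lt_irrefl _ h

lemma shrink {f : ℝ → ℝ} (hf : Continuous f) {c d u v a b : ℝ} (hu' : u ∈ Icc c d)
    (hv' : v ∈ Icc c d) (hu : f u = a) (hv : f v = b) (hab : a ≤ b) :
    ∃ c' d', c ≤ c' ∧ c' ≤ d' ∧ d' ≤ d ∧ (∀ x ∈ Icc c' d', f x ∈ Icc a b) ∧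
      ((f c' = a ∧ f d' = b) ∨ (f c' = b ∧ f d' = a)) := by
  rcases le_total u v with h | h
  · obtain ⟨c', d', h1, h2, h3, h4, h5, h6⟩ := shrink_aux hf h hu hv hab
    exact ⟨c', d', hu'.1.trans h1, h2, h3.trans hv'.2, h4, Or.inl ⟨h5, h6⟩⟩
  · obtain ⟨c', d', h1, h2, h3, h4, h5, h6⟩ :=
      shrink_aux (f := fun x => f (-x)) (hf.comp continuous_neg) (neg_le_neg h)
        (by simpa using hu) (by simpa using hv) hab
    refine ⟨-d', -c', by linarith [hv'.1], by linarith, by linarith [hu'.2], ?_,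
      Or.inr ⟨h6, h5⟩⟩
    intro x hx
    have := h4 (-x) ⟨by linarith [hx.2], by linarith [hx.1]⟩
    simpa using this

lemma Cov.surj {f : ℝ → ℝ} (hf : Continuous f) {a b a' b' y : ℝ} (h : Cov f a b a' b')
    (hy : y ∈ Icc a' b') : ∃ x ∈ Icc a b, f x = y := by
  obtain ⟨s, hs, t, ht, h1, h2⟩ := h
  have hsub : uIcc s t ⊆ Icc a b := by
    rw [uIcc]
    exact Icc_subset_Icc (le_inf hs.1 ht.1) (sup_le hs.2 ht.2)
  obtain ⟨x, hx, hxy⟩ := intermediate_value_uIcc (hf.continuousOn (s := uIcc s t))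
    (show y ∈ uIcc (f s) (f t) from mem_uIcc_of_le (h1.trans hy.1) (hy.2.trans h2))
  exact ⟨x, hsub hx, hxy⟩

lemma chain {f : ℝ → ℝ} (hf : Continuous f) (a b : ℕ → ℝ) (n : ℕ)
    (hab : ∀ i ≤ n, a i ≤ b i)
    (hcov : ∀ i < n, Cov f (a i) (b i) (a (i+1)) (b (i+1))) :
    ∃ c d, a 0 ≤ c ∧ c ≤ d ∧ d ≤ b 0 ∧
      (∀ i ≤ n, ∀ x ∈ Icc c d, f^[i] x ∈ Icc (a i) (b i)) ∧
      ((f^[n] c = a n ∧ f^[n] d = b n) ∨ (f^[n] c = b n ∧ f^[n] d = a n)) := by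
  induction n with
  | zero =>
    refine ⟨a 0, b 0, le_rfl, hab 0 le_rfl, le_rfl, ?_, Or.inl ⟨rfl, rfl⟩⟩
    intro i hi x hx
    obtain rfl : i = 0 := by omega
    exact hx
  | succ n ih =>
    obtain ⟨c, d, h1, h2, h3, h4, h5⟩ := ih (fun i hi => hab i (by omega))
      (fun i hi => hcov i (by omega))
    have key : ∀ y ∈ Icc (a (n+1)) (b (n+1)), ∃ x ∈ Icc c d, f^[n+1] x = y := by
      intro y hy
      obtain ⟨s, hs, hsy⟩ := (hcov n (by omega)).surj hf hy
      have : s ∈ uIcc (f^[n] c) (f^[n] d) := by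
        rcases h5 with ⟨h, h'⟩ | ⟨h, h'⟩ <;> rw [h, h']
        · exact mem_uIcc_of_le hs.1 hs.2
        · exact mem_uIcc_of_ge hs.1 hs.2
      obtain ⟨x, hx, hxs⟩ := intermediate_value_uIcc ((hf.iterate n).continuousOn) this
      rw [uIcc_of_le h2] at hx
      exact ⟨x, hx, by rw [iterate_succ_apply', hxs, hsy]⟩
    have hle := hab (n+1) le_rfl
    obtain ⟨u, hu, hu'⟩ := key _ ⟨le_rfl, hle⟩
    obtain ⟨v, hv, hv'⟩ := key _ ⟨hle, le_rfl⟩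
    obtain ⟨c', d', g1, g2, g3, g4, g5⟩ := shrink (hf.iterate (n+1)) hu hv hu' hv' hle
    refine ⟨c', d', h1.trans g1, g2, g3.trans h3, ?_, g5⟩
    intro i hi x hx
    rcases Nat.lt_or_ge n i with h | h
    · obtain rfl : i = n + 1 := by omega
      exact g4 x hx
    · exact h4 i h x ⟨g1.trans hx.1, hx.2.trans g3⟩

lemma loop {f : ℝ → ℝ} (hf : Continuous f) (a b : ℕ → ℝ) (n : ℕ)
    (hab : ∀ i ≤ n, a i ≤ b i)
    (hcov : ∀ i < n, Cov f (a i) (b i) (a (i+1)) (b (i+1)))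
    (ha : a n = a 0) (hb : b n = b 0) :
    ∃ x, f^[n] x = x ∧ ∀ i ≤ n, f^[i] x ∈ Icc (a i) (b i) := by
  obtain ⟨c, d, h1, h2, h3, h4, h5⟩ := chain hf a b n hab hcov
  rw [ha, hb] at h5
  have hcont : Continuous (fun x => f^[n] x - x) := (hf.iterate n).sub continuous_id
  have : (0:ℝ) ∈ uIcc (f^[n] c - c) (f^[n] d - d) := by
    rcases h5 with ⟨h, h'⟩ | ⟨h, h'⟩ <;> rw [h, h']
    · exact mem_uIcc_of_le (by linarith) (by linarith)
    · exact mem_uIcc_of_ge (by linarith) (by linarith)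
  obtain ⟨x, hx, hx0⟩ := intermediate_value_uIcc hcont.continuousOn this
  rw [uIcc_of_le h2] at hx
  exact ⟨x, by simpa [sub_eq_zero] using hx0, fun i hi => h4 i hi x hx⟩

/-- Two-sided horseshoe-like configuration gives all even periods. -/
lemma even_of_config {f : ℝ → ℝ} (hf : Continuous f) {v w z q : ℝ} (hvw : v < w) (hwz : w < z)
    (hzq : z < q) (hv : f v = z) (hz : f z = z) (hw : f w = q) (hq : f q < v)
    (k : ℕ) (hk : 0 < k) : Per f (2 * k) := by
  obtain ⟨x, hx, hI⟩ := loop hf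
    (fun i => if i % 2 = 1 then z else if i = 0 ∨ i = 2 * k then v else w)
    (fun i => if i % 2 = 1 then q else if i = 0 ∨ i = 2 * k then w else z) (2 * k)
    (by intro i _; split_ifs <;> linarith)
    (by
      intro i hi
      rcases Nat.mod_two_eq_zero_or_one i with h | h
      · have h' : (i + 1) % 2 = 1 := by omega
        simp only [h, h', if_true, zero_ne_one, if_false]
        split_ifs
        · exact ⟨v, ⟨le_rfl, hvw.le⟩, w, ⟨hvw.le, le_rfl⟩, hv.le, hw.ge⟩
        · exact ⟨z, ⟨hwz.le, le_rfl⟩, w, ⟨le_rfl, hwz.le⟩, hz.le, hw.ge⟩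
      · have h' : ¬ (i + 1) % 2 = 1 := by omega
        simp only [h, h', if_true, if_false]
        refine ⟨q, ⟨hzq.le, le_rfl⟩, z, ⟨le_rfl, hzq.le⟩, ?_, ?_⟩ <;> split_ifs <;> linarith)
    (by simp) (by simp)
  have hper : IsPeriodicPt f (2 * k) x := hx
  have hpos : 0 < minimalPeriod f x := hper.minimalPeriod_pos (by omega)
  have hdvd := hper.minimalPeriod_dvd
  have hle := Nat.le_of_dvd (by omega) hdvd
  refine ⟨by omega, x, ?_⟩
  set d := minimalPeriod f x with hd
  have hdx : f^[d] x = x := isPeriodicPt_minimalPeriod f x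
  by_contra hne
  have h0 : x ∈ Icc v w := by simpa using hI 0 (by omega)
  have hdI := hI d hle
  rw [hdx] at hdI
  rcases Nat.mod_two_eq_zero_or_one d with h | h
  · have h2 : ¬ (d = 0 ∨ d = 2 * k) := by omega
    simp only [h, h2, zero_ne_one, if_false] at hdI
    have hxw : x = w := le_antisymm h0.2 hdI.1
    have h2I := hI 2 (by omega)
    have : f^[2] x = f q := by rw [hxw]; simp [hw]
    rw [this] at h2I
    have := h2I.1
    simp only [Nat.mod_self, zero_ne_one, if_false] at this
    split_ifs at this <;> linarith
  · simp only [h, if_true] at hdI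
    linarith [hdI.1, h0.2]

/-- Odd periods above the smallest one. -/
lemma odd_of_config {f : ℝ → ℝ} (hf : Continuous f) {p q z v : ℝ} (hpz : p < z)
    (hzq : z < q) (hz : f z = z) (hp : q ≤ f p) (hq : f q ≤ p) {n i₀ : ℕ}
    (hn : f^[n] p = p) (hnodd : Odd n) (hi₀ : i₀ < n) (hav : f^[i₀] p ≤ v) (hvp : v ≤ p)
    (hfa : f^[i₀ + 1] p < z) (hv : f v = z)
    (hmin : ∀ d, Odd d → 1 < d → Per f d → n ≤ d)
    (m : ℕ) (hm : Odd m) (hmn : n < m) : Per f m := by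
  obtain ⟨j, hj⟩ : ∃ j, m = n + 2 * j := by
    obtain ⟨r, hr⟩ := hnodd; obtain ⟨s, hs⟩ := hm; exact ⟨s - r, by omega⟩
  have hj0 : 0 < j := by omega
  have hi0 : i₀ ≠ 0 := by
    rintro rfl
    simp at hfa
    linarith
  set y : ℕ → ℝ := fun t => f^[t] p with hy
  have hys : ∀ t, y (t+1) = f (y t) := fun t => iterate_succ_apply' f t p
  have hy0 : y 0 = p := rfl
  have hyn : y n = p := hn
  set a : ℕ → ℝ := fun i => if i < 2 * j then (if i % 2 = 0 then p else z)
    else min z (y (i - 2 * j)) with ha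
  set b : ℕ → ℝ := fun i => if i < 2 * j then (if i % 2 = 0 then z else q)
    else if i = 2 * j + i₀ then v else max z (y (i - 2 * j)) with hb
  have hyi : y i₀ ≤ v := hav
  have hyi' : y (i₀ + 1) < z := hfa
  have hvz : v < z := by linarith
  obtain ⟨x, hx, hI⟩ := loop hf a b m
    (by
      intro i _
      simp only [ha, hb]
      split_ifs with h1 h2 h2
      · linarith
      · linarith
      · subst h2
        simp only [Nat.add_sub_cancel_left]
        exact (min_le_right _ _).trans hyi
      · exact (min_le_left _ _).trans (le_max_left _ _))
    (by
      intro i hi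
      by_cases h1 : i < 2 * j
      · by_cases h2 : i % 2 = 0
        · -- from the left interval to the right one
          have h3 : i + 1 < 2 * j := by omega
          have h4 : ¬ (i + 1) % 2 = 0 := by omega
          simp only [ha, hb, h1, h2, h3, h4, if_true, if_false]
          exact ⟨z, ⟨hpz.le, le_rfl⟩, p, ⟨le_rfl, hpz.le⟩, hz.le, hp⟩
        · have e : Cov f z q p z := ⟨q, ⟨hzq.le, le_rfl⟩, z, ⟨le_rfl, hzq.le⟩, hq, hz.ge⟩
          by_cases h3 : i + 1 < 2 * j
          · have h4 : (i + 1) % 2 = 0 := by omega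
            simp only [ha, hb, h1, h2, h3, h4, if_true, if_false]
            exact e
          · have h4 : i + 1 = 2 * j := by omega
            have h5 : ¬ (2 * j = 2 * j + i₀) := by omega
            simp only [ha, hb, h1, h2, h4, h5, lt_irrefl, if_true, if_false, Nat.sub_self, hy0]
            rw [min_eq_right hpz.le, max_eq_left hpz.le]
            exact e
      · obtain ⟨t, rfl⟩ : ∃ t, i = 2 * j + t := ⟨i - 2 * j, by omega⟩
        have h3 : ¬ (2 * j + t + 1 < 2 * j) := by omega
        have hb1 : b (2 * j + t + 1) ≤ max z (y (t + 1)) := by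
          simp only [hb, h3, if_false]
          split_ifs with h4
          · exact hvz.le.trans (le_max_left _ _)
          · rw [show 2 * j + t + 1 - 2 * j = t + 1 by omega]
        have ha1 : a (2 * j + t + 1) = min z (y (t + 1)) := by
          simp only [ha, h3, if_false]
          rw [show 2 * j + t + 1 - 2 * j = t + 1 by omega]
        have ha0 : a (2 * j + t) = min z (y t) := by
          simp only [ha, h1, if_false, Nat.add_sub_cancel_left]
        suffices h : Cov f (a (2 * j + t)) (b (2 * j + t)) (min z (y (t+1))) (max z (y (t+1))) by
          obtain ⟨s, hs, r, hr, h1, h2⟩ := h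
          exact ⟨s, hs, r, hr, by rw [ha1]; exact h1, hb1.trans h2⟩
        rw [ha0]
        by_cases h4 : t = i₀
        · have hb0 : b (2 * j + t) = v := by
            simp only [hb, h4, if_true]
            simp
          rw [hb0, h4, min_eq_right hyi'.le, max_eq_left hyi'.le,
            min_eq_right (hyi.trans hvz.le)]
          exact ⟨y i₀, ⟨le_rfl, hyi⟩, v, ⟨hyi, le_rfl⟩, (hys _).ge, hv.ge⟩
        · have hb0 : b (2 * j + t) = max z (y t) := by
            have : ¬ (2 * j + t = 2 * j + i₀) := by omega
            simp only [hb, h1, this, if_false, Nat.add_sub_cancel_left]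
          rw [hb0]
          have hzm : z ∈ Icc (min z (y t)) (max z (y t)) := ⟨min_le_left _ _, le_max_left _ _⟩
          have hym : y t ∈ Icc (min z (y t)) (max z (y t)) := ⟨min_le_right _ _, le_max_right _ _⟩
          rcases le_total z (y (t+1)) with h | h
          · rw [min_eq_left h, max_eq_right h]
            exact ⟨z, hzm, y t, hym, hz.le, (hys t).le⟩
          · rw [min_eq_right h, max_eq_left h]
            exact ⟨y t, hym, z, hzm, (hys t).ge, hz.ge⟩)
    (by
      have h1 : ¬ (n + 2 * j < 2 * j) := by omega
      have h2 : 0 < 2 * j := by omega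
      simp only [ha, hj, h1, h2, if_true, if_false, Nat.add_sub_cancel, hyn]
      simp [hpz.le])
    (by
      have h1 : ¬ (n + 2 * j < 2 * j) := by omega
      have h2 : 0 < 2 * j := by omega
      have h3 : ¬ (n + 2 * j = 2 * j + i₀) := by omega
      simp only [hb, hj, h1, h2, h3, if_true, if_false, Nat.add_sub_cancel, hyn]
      simp [hpz.le])
  have hper : IsPeriodicPt f m x := hx
  have hpos : 0 < minimalPeriod f x := hper.minimalPeriod_pos (by omega)
  have hdvd := hper.minimalPeriod_dvd
  refine ⟨by omega, x, ?_⟩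
  have hper' : Per f (minimalPeriod f x) := ⟨hpos, x, rfl⟩
  have hdx : f^[minimalPeriod f x] x = x := isPeriodicPt_minimalPeriod f x
  generalize minimalPeriod f x = d at *
  by_contra hne
  obtain ⟨e, he⟩ := hdvd
  have hodd : Odd d ∧ Odd e := by rw [he, Nat.odd_mul] at hm; exact hm
  have he3 : 3 ≤ e := by
    obtain ⟨r, hr⟩ := hodd.2
    rcases r with _ | r
    · simp [hr] at he; omega
    · omega
  have h3d : 3 * d ≤ m := by rw [he]; nlinarith
  have hd2j : d < 2 * j := by
    rcases Nat.lt_or_ge 1 d with h | h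
    · have := hmin d hodd.1 h hper'
      omega
    · omega
  have h0 : x ∈ Icc p z := by
    have := hI 0 (by omega)
    simpa [ha, hb, hj0] using this
  have hdI := hI d (by omega)
  rw [hdx] at hdI
  have hdm : ¬ d % 2 = 0 := by have := Nat.odd_iff.1 hodd.1; omega
  simp only [ha, hb, hd2j, hdm, if_true, if_false] at hdI
  have hxz : x = z := le_antisymm h0.2 hdI.1
  have hfix : f^[2 * j + i₀] x = z := by rw [hxz]; exact iterate_fixed hz _
  have := (hI (2 * j + i₀) (by omega)).2
  rw [hfix] at this
  simp [hb] at this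
  linarith

end Shark

namespace Shark

structure Cyc (f : ℝ → ℝ) (P : Finset ℝ) (n : ℕ) : Prop where
  ne : P.Nonempty
  maps : ∀ x ∈ P, f x ∈ P
  trans : ∀ x ∈ P, ∀ y ∈ P, ∃ i < n, f^[i] x = y
  per : ∀ x ∈ P, minimalPeriod f x = n

lemma Cyc.exists {f : ℝ → ℝ} {n : ℕ} (h : Per f n) : ∃ P, Cyc f P n := by
  obtain ⟨hn, x, hx⟩ := h
  have hxp : x ∈ periodicPts f := minimalPeriod_pos_iff_mem_periodicPts.1 (by omega)
  have hfx : f^[n] x = x := by rw [← hx]; exact isPeriodicPt_minimalPeriod f x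
  have hmod : ∀ i, f^[i % n] x = f^[i] x := by
    intro i; rw [← hx]; exact iterate_mod_minimalPeriod_eq
  have hmem : ∀ i, f^[i] x ∈ (Finset.range n).image (fun i => f^[i] x) := by
    intro i
    rw [← hmod]
    exact Finset.mem_image_of_mem _ (Finset.mem_range.2 (Nat.mod_lt _ hn))
  refine ⟨(Finset.range n).image (fun i => f^[i] x), ⟨x, hmem 0⟩, ?_, ?_, ?_⟩
  · intro y hy
    obtain ⟨i, -, rfl⟩ := Finset.mem_image.1 hy
    simpa only [iterate_succ_apply'] using hmem (i+1)
  · intro y hy y' hy'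
    obtain ⟨i, hi, rfl⟩ := Finset.mem_image.1 hy
    obtain ⟨j, hj, rfl⟩ := Finset.mem_image.1 hy'
    rw [Finset.mem_range] at hi hj
    refine ⟨(j + (n - i)) % n, Nat.mod_lt _ hn, ?_⟩
    rw [← iterate_add_apply, ← hmod, Nat.mod_add_mod]
    rw [show j + (n - i) + i = j + n by omega, hmod, iterate_add_apply, hfx]
  · intro y hy
    obtain ⟨i, hi, rfl⟩ := Finset.mem_image.1 hy
    rw [minimalPeriod_apply_iterate hxp, hx]

/-- Conjugation by `x ↦ -x`. -/
def refl (f : ℝ → ℝ) : ℝ → ℝ := fun x => -f (-x)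

lemma refl_iterate (f : ℝ → ℝ) (n : ℕ) (x : ℝ) : (refl f)^[n] x = -f^[n] (-x) := by
  induction n with
  | zero => simp
  | succ n ih => rw [iterate_succ_apply', ih, iterate_succ_apply', refl, neg_neg]

lemma refl_minimalPeriod (f : ℝ → ℝ) (x : ℝ) :
    minimalPeriod (refl f) x = minimalPeriod f (-x) := by
  rw [minimalPeriod_eq_minimalPeriod_iff]
  intro n
  simp only [IsPeriodicPt, IsFixedPt, refl_iterate]
  exact neg_eq_iff_eq_neg

lemma Per.refl {f : ℝ → ℝ} {n : ℕ} : Per (refl f) n ↔ Per f n := by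
  constructor
  · rintro ⟨h, x, hx⟩
    exact ⟨h, -x, by rw [← refl_minimalPeriod, hx]⟩
  · rintro ⟨h, x, hx⟩
    exact ⟨h, -x, by rw [refl_minimalPeriod, neg_neg, hx]⟩

lemma Cyc.refl {f : ℝ → ℝ} {P : Finset ℝ} {n : ℕ} (h : Cyc f P n) :
    Cyc (refl f) (P.image Neg.neg) n := by
  refine ⟨h.ne.image _, ?_, ?_, ?_⟩
  · intro x hx
    obtain ⟨y, hy, rfl⟩ := Finset.mem_image.1 hx
    rw [Shark.refl, neg_neg]
    exact Finset.mem_image_of_mem _ (h.maps y hy)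
  · intro x hx x' hx'
    obtain ⟨y, hy, rfl⟩ := Finset.mem_image.1 hx
    obtain ⟨y', hy', rfl⟩ := Finset.mem_image.1 hx'
    obtain ⟨i, hi, e⟩ := h.trans y hy y' hy'
    exact ⟨i, hi, by rw [refl_iterate, neg_neg, e]⟩
  · intro x hx
    obtain ⟨y, hy, rfl⟩ := Finset.mem_image.1 hx
    rw [refl_minimalPeriod, neg_neg, h.per y hy]

lemma Cyc.ne_self {f : ℝ → ℝ} {P : Finset ℝ} {n : ℕ} (h : Cyc f P n) (hn : 2 ≤ n) {x : ℝ}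
    (hx : x ∈ P) : f x ≠ x := by
  intro e
  have h1 := h.per x hx
  rw [minimalPeriod_eq_one_iff_isFixedPt.2 e] at h1
  omega

/-- The centre of a cycle. -/
lemma Cyc.center {f : ℝ → ℝ} (hf : Continuous f) {P : Finset ℝ} {n : ℕ} (h : Cyc f P n)
    (hn : 2 ≤ n) : ∃ p ∈ P, ∃ q ∈ P, ∃ z, p < z ∧ z < q ∧ f z = z ∧ q ≤ f p ∧ f q ≤ p ∧
      (∀ x ∈ P, x < z → x ≤ p) ∧ (∀ x ∈ P, z < x → q ≤ x ∧ f x < x) := by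
  have h1 : (P.filter (fun x => x < f x)).Nonempty := by
    refine ⟨P.min' h.ne, Finset.mem_filter.2 ⟨P.min'_mem _, ?_⟩⟩
    exact lt_of_le_of_ne (P.min'_le _ (h.maps _ (P.min'_mem _)))
      (h.ne_self hn (P.min'_mem _)).symm
  obtain ⟨p, hp, hpmax⟩ := Finset.exists_max_image _ id h1
  simp only [Finset.mem_filter, id] at hp hpmax
  have h2 : (P.filter (fun x => p < x)).Nonempty :=
    ⟨f p, Finset.mem_filter.2 ⟨h.maps p hp.1, hp.2⟩⟩
  obtain ⟨q, hq, hqmin⟩ := Finset.exists_min_image _ id h2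
  simp only [Finset.mem_filter, id] at hq hqmin
  have hdec : ∀ x ∈ P, p < x → f x < x := by
    intro x hx hpx
    by_contra hc
    push Not at hc
    have := hpmax x ⟨hx, lt_of_le_of_ne hc (h.ne_self hn hx).symm⟩
    linarith
  have hqp : q ≤ f p := hqmin _ ⟨h.maps p hp.1, hp.2⟩
  have hfq : f q ≤ p := by
    by_contra hc
    push Not at hc
    have := hqmin _ ⟨h.maps q hq.1, hc⟩
    have := hdec q hq.1 hq.2
    linarith
  obtain ⟨z, hz, hz0⟩ := intermediate_value_Icc' hq.2.le
    ((hf.sub continuous_id).continuousOn (s := Icc p q))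
    (show (0:ℝ) ∈ Icc (f q - q) (f p - p) from ⟨by linarith [hq.2], by linarith [hp.2]⟩)
  have hz' : f z = z := by simpa [sub_eq_zero] using hz0
  have hpz : p < z := lt_of_le_of_ne hz.1 (by rintro rfl; exact h.ne_self hn hp.1 hz')
  have hzq : z < q := lt_of_le_of_ne hz.2 (by rintro rfl; exact h.ne_self hn hq.1 hz')
  refine ⟨p, hp.1, q, hq.1, z, hpz, hzq, hz', hqp, hfq, ?_, ?_⟩
  · intro x hx hxz
    by_contra hc
    push Not at hc
    have := hqmin x ⟨hx, hc⟩
    linarith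
  · intro x hx hxz
    exact ⟨hqmin x ⟨hx, hpz.trans hxz⟩, hdec x hx (hpz.trans hxz)⟩

lemma Cyc.even {f : ℝ → ℝ} (hf : Continuous f) {P : Finset ℝ} {n : ℕ} (h : Cyc f P n)
    (hn : 2 ≤ n) {p z a : ℝ} (hp : p ∈ P) (hpz : p < z) (hz : f z = z) (hfp : z < f p)
    (hL : ∀ x ∈ P, x < z → x ≤ p) (hR : ∀ x ∈ P, z < x → f x < x)
    (ha : a ∈ P) (haz : a < z) (hfa : f a < z) (k : ℕ) (hk : 0 < k) : Per f (2 * k) := by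
  have hzP : z ∉ P := fun hzP => h.ne_self hn hzP hz
  have hap := hL a ha haz
  have hS : IsCompact (Icc a p ∩ f ⁻¹' {z}) :=
    isCompact_Icc.inter_right (isClosed_singleton.preimage hf)
  obtain ⟨v, ⟨hv1, hv2⟩, hv3⟩ := hS.exists_isGreatest (by
    obtain ⟨t, ht, htz⟩ := intermediate_value_Icc hap (hf.continuousOn (s := Icc a p))
      (show z ∈ Icc (f a) (f p) from ⟨hfa.le, hfp.le⟩)
    exact ⟨t, ht, htz⟩)
  simp only [mem_preimage, mem_singleton_iff] at hv2
  have hvP : v ∉ P := fun hvP => hzP (hv2 ▸ h.maps v hvP)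
  have hvp : v < p := lt_of_le_of_ne hv1.2 (by rintro rfl; exact hvP hp)
  have hsw : ∀ y ∈ P, v < y → y < z → z < f y := by
    intro y hy hvy hyz
    have hyp := hL y hy hyz
    by_contra hc
    push Not at hc
    obtain ⟨t, ht, htz⟩ := intermediate_value_Icc hyp (hf.continuousOn (s := Icc y p))
      (show z ∈ Icc (f y) (f p) from ⟨hc, hfp.le⟩)
    have : t ≤ v := hv3 ⟨⟨by linarith [ht.1, hv1.1], ht.2⟩, htz⟩
    linarith [ht.1]
  obtain ⟨w₀, hw₀, hw₀max⟩ := Finset.exists_max_image (P.filter (fun x => v < x ∧ x < z)) f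
    ⟨p, Finset.mem_filter.2 ⟨hp, hvp, hpz⟩⟩
  simp only [Finset.mem_filter] at hw₀ hw₀max
  have hw₀z := hsw w₀ hw₀.1 hw₀.2.1 hw₀.2.2
  obtain ⟨q, hqP, hzq, hqw, hfq⟩ : ∃ q ∈ P, z < q ∧ q ≤ f w₀ ∧ f q < v := by
    by_contra hc
    push Not at hc
    have hinv : ∀ i, f^[i] p ∈ P ∧ v < f^[i] p ∧ f^[i] p ≤ f w₀ := by
      intro i
      induction i with
      | zero => exact ⟨hp, hvp, by simp; linarith⟩
      | succ i ih =>
        rw [iterate_succ_apply']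
        generalize f^[i] p = y at ih
        obtain ⟨hy, hvy, hyw⟩ := ih
        refine ⟨h.maps y hy, ?_⟩
        rcases lt_trichotomy y z with hyz | hyz | hyz
        · have := hsw y hy hvy hyz
          exact ⟨by linarith, hw₀max y ⟨hy, hvy, hyz⟩⟩
        · exact absurd (hyz ▸ hy) hzP
        · have h1 := hc y hy hyz hyw
          have h2 := hR y hy hyz
          refine ⟨lt_of_le_of_ne h1 ?_, by linarith⟩
          intro e
          exact hvP (e ▸ h.maps y hy)
    obtain ⟨i, -, hi⟩ := h.trans p hp a ha
    have := (hinv i).2.1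
    rw [hi] at this
    linarith [hv1.1]
  obtain ⟨w, hw, hwq⟩ := intermediate_value_Icc' hw₀.2.2.le (hf.continuousOn (s := Icc w₀ z))
    (show q ∈ Icc (f z) (f w₀) from ⟨by rw [hz]; exact hzq.le, hqw⟩)
  have hwz : w < z := lt_of_le_of_ne hw.2 (by rintro rfl; linarith)
  exact even_of_config hf (by linarith [hw.1, hw₀.2.1] : v < w) hwz hzq hv2 hz hwq hfq k hk

lemma Cyc.odd {f : ℝ → ℝ} (hf : Continuous f) {P : Finset ℝ} {n : ℕ} (h : Cyc f P n)
    {p q z a : ℝ} (hp : p ∈ P) (hpz : p < z) (hzq : z < q) (hz : f z = z)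
    (hfp : q ≤ f p) (hfq : f q ≤ p)
    (hL : ∀ x ∈ P, x < z → x ≤ p)
    (ha : a ∈ P) (haz : a < z) (hfa : f a < z) (hnodd : Odd n)
    (hmin : ∀ d, Odd d → 1 < d → Per f d → n ≤ d)
    (m : ℕ) (hm : Odd m) (hmn : n < m) : Per f m := by
  have hap := hL a ha haz
  obtain ⟨v, hv, hvz⟩ := intermediate_value_Icc hap (hf.continuousOn (s := Icc a p))
      (show z ∈ Icc (f a) (f p) from ⟨hfa.le, by linarith⟩)
  obtain ⟨i, hi, hia⟩ := h.trans p hp a ha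
  refine odd_of_config hf hpz hzq hz hfp hfq (n := n) (i₀ := i) (v := v) ?_ hnodd hi
    (hia.trans_le hv.1) hv.2 ?_ hvz hmin m hm hmn
  · rw [← h.per p hp]; exact isPeriodicPt_minimalPeriod f p
  · rw [iterate_succ_apply', hia]; exact hfa

/-- If some point of the cycle does not switch sides, then either this happens on the left, or the
reflected situation is of the same kind. -/
lemma Cyc.nonswitch {f : ℝ → ℝ} (hf : Continuous f) {P : Finset ℝ} {n : ℕ} (h : Cyc f P n)
    (hn : 2 ≤ n) {p q z a : ℝ} (hp : p ∈ P) (hq : q ∈ P) (hpz : p < z) (hzq : z < q)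
    (hz : f z = z) (hfp : q ≤ f p) (hfq : f q ≤ p)
    (hL : ∀ x ∈ P, x < z → x ≤ p) (hR : ∀ x ∈ P, z < x → q ≤ x ∧ f x < x)
    (ha : a ∈ P) (hns : (a < z ∧ f a < z) ∨ (z < a ∧ z < f a)) :
    (∀ k, 0 < k → Per f (2 * k)) ∧
    (Odd n → (∀ d, Odd d → 1 < d → Per f d → n ≤ d) → ∀ m, Odd m → n < m → Per f m) := by
  by_cases hl : ∃ a ∈ P, a < z ∧ f a < z
  · obtain ⟨a, ha, haz, hfa⟩ := hl
    exact ⟨h.even hf hn hp hpz hz (by linarith) hL (fun x hx hxz => (hR x hx hxz).2) ha haz hfa,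
      fun ho hmin => h.odd hf hp hpz hzq hz hfp hfq hL ha haz hfa ho hmin⟩
  · push Not at hl
    have hns : z < a ∧ z < f a := by
      rcases hns with hns | hns
      · linarith [hl a ha hns.1]
      · exact hns
    have hg : Continuous (Shark.refl f) := (hf.comp continuous_neg).neg
    have hL' : ∀ x ∈ P.image Neg.neg, x < -z → x ≤ -q := by
      intro x hx hxz
      obtain ⟨y, hy, rfl⟩ := Finset.mem_image.1 hx
      linarith [(hR y hy (by linarith)).1]
    have hR' : ∀ x ∈ P.image Neg.neg, -z < x → Shark.refl f x < x := by
      intro x hx hxz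
      obtain ⟨y, hy, rfl⟩ := Finset.mem_image.1 hx
      rw [Shark.refl, neg_neg]
      linarith [hl y hy (by linarith)]
    have hz' : Shark.refl f (-z) = -z := by rw [Shark.refl, neg_neg, hz]
    have hq' := Finset.mem_image_of_mem Neg.neg hq
    have ha' := Finset.mem_image_of_mem Neg.neg ha
    have haz : Shark.refl f (-a) < -z := by rw [Shark.refl, neg_neg]; linarith
    have hfq' : -p ≤ Shark.refl f (-q) := by rw [Shark.refl, neg_neg]; linarith
    have hfp' : Shark.refl f (-p) ≤ -q := by rw [Shark.refl, neg_neg]; linarith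
    refine ⟨fun k hk => ?_, fun ho hmin m hm hmn => ?_⟩
    · rw [← Per.refl]
      exact h.refl.even hg hn hq' (by linarith) hz' (by linarith) hL' hR' ha' (by linarith)
        haz k hk
    · rw [← Per.refl]
      exact h.refl.odd hg hq' (by linarith) (by linarith) hz' hfq' hfp' hL' ha' (by linarith)
        haz ho (fun d h1 h2 h3 => hmin d h1 h2 (Per.refl.1 h3)) m hm hmn

lemma per_one {f : ℝ → ℝ} (hf : Continuous f) {n : ℕ} (h : Per f n) : Per f 1 := by
  rcases Nat.lt_or_ge n 2 with h2 | h2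
  · obtain rfl : n = 1 := by have := h.1; omega
    exact h
  · obtain ⟨P, hP⟩ := Cyc.exists h
    obtain ⟨p, -, q, -, z, -, -, hz, -⟩ := hP.center hf h2
    exact ⟨one_pos, z, minimalPeriod_eq_one_iff_isFixedPt.2 hz⟩

lemma per_two {f : ℝ → ℝ} (hf : Continuous f) {n : ℕ} (hn : 2 ≤ n) (h : Per f n) : Per f 2 := by
  obtain ⟨P, hP⟩ := Cyc.exists h
  obtain ⟨p, hp, q, hq, z, hpz, hzq, hz, hfp, hfq, hL, hR⟩ := hP.center hf hn
  have hzP : z ∉ P := fun hzP => hP.ne_self hn hzP hz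
  by_cases hns : ∃ a ∈ P, (a < z ∧ f a < z) ∨ (z < a ∧ z < f a)
  · obtain ⟨a, ha, hns⟩ := hns
    exact (hP.nonswitch hf hn hp hq hpz hzq hz hfp hfq hL hR ha hns).1 1 one_pos
  · push Not at hns
    have hsurj : ∀ y ∈ P, ∃ x ∈ P, f x = y := by
      intro y hy
      obtain ⟨i, -, hi⟩ := hP.trans (f y) (hP.maps y hy) y hy
      have hit : ∀ i, f^[i] y ∈ P := by
        intro i
        induction i with
        | zero => exact hy
        | succ i ih => rw [iterate_succ_apply']; exact hP.maps _ ih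
      exact ⟨f^[i] y, hit i, by rw [← iterate_succ_apply' f, iterate_succ_apply, hi]⟩
    have hl := P.min'_mem hP.ne
    have hr := P.max'_mem hP.ne
    have hlmin := P.min'_le
    have hrmax := P.le_max'
    set l := P.min' hP.ne
    set r := P.max' hP.ne
    have hpre : ∀ y ∈ P, z < y → ∃ x ∈ Icc l p, f x = y := by
      intro y hy hzy
      obtain ⟨x, hx, e⟩ := hsurj y hy
      refine ⟨x, ⟨hlmin x hx, hL x hx ?_⟩, e⟩
      rcases lt_trichotomy x z with h | h | h
      · exact h
      · exact absurd (h ▸ hx) hzP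
      · have := (hns x hx).2 h
        linarith
    have hpre' : ∀ y ∈ P, y < z → ∃ x ∈ Icc q r, f x = y := by
      intro y hy hzy
      obtain ⟨x, hx, e⟩ := hsurj y hy
      refine ⟨x, ⟨(hR x hx ?_).1, hrmax x hx⟩, e⟩
      rcases lt_trichotomy x z with h | h | h
      · have := (hns x hx).1 h
        linarith
      · exact absurd (h ▸ hx) hzP
      · exact h
    have hlp := hlmin p hp
    have hqr := hrmax q hq
    obtain ⟨s1, hs1, e1⟩ := hpre q hq hzq
    obtain ⟨s2, hs2, e2⟩ := hpre r hr (by linarith)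
    obtain ⟨t1, ht1, e3⟩ := hpre' l hl (by linarith)
    obtain ⟨t2, ht2, e4⟩ := hpre' p hp hpz
    obtain ⟨x, hx, hI⟩ := loop hf (fun i => if i = 1 then q else l)
      (fun i => if i = 1 then r else p) 2
      (by intro i _; split_ifs <;> assumption)
      (by
        intro i hi
        interval_cases i
        · simpa using ⟨s1, hs1, s2, hs2, e1.le, e2.ge⟩
        · simpa using ⟨t1, ht1, t2, ht2, e3.le, e4.ge⟩) (by simp) (by simp)
    refine ⟨two_pos, x, ?_⟩
    have hper : IsPeriodicPt f 2 x := hx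
    rcases (Nat.dvd_prime Nat.prime_two).1 hper.minimalPeriod_dvd with h1 | h1
    · exfalso
      have hfix : f x = x := minimalPeriod_eq_one_iff_isFixedPt.1 h1
      have a0 := hI 0 (by omega)
      have a1 := hI 1 (by omega)
      simp [hfix] at a0 a1
      linarith [a0.2, a1.1]
    · exact h1

lemma per_odd {f : ℝ → ℝ} (hf : Continuous f) {n : ℕ} (ho : Odd n) (hn : 1 < n)
    (h : Per f n) : (∀ m, 0 < m → Even m → Per f m) ∧ (∀ m, Odd m → n ≤ m → Per f m) := by
  classical
  have hex : ∃ d, Odd d ∧ 1 < d ∧ Per f d := ⟨n, ho, hn, h⟩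
  have hspec := Nat.find_spec hex
  have hmin : ∀ d, Odd d → 1 < d → Per f d → Nat.find hex ≤ d :=
    fun d h1 h2 h3 => Nat.find_min' hex ⟨h1, h2, h3⟩
  have hle : Nat.find hex ≤ n := hmin n ho hn h
  generalize Nat.find hex = n₀ at *
  obtain ⟨ho₀, hn₀, hp₀⟩ := hspec
  obtain ⟨P, hP⟩ := Cyc.exists hp₀
  obtain ⟨p, hp, q, hq, z, hpz, hzq, hz, hfp, hfq, hL, hR⟩ := hP.center hf hn₀
  have hzP : z ∉ P := fun hzP => hP.ne_self hn₀ hzP hz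
  obtain ⟨a, ha, hns⟩ : ∃ a ∈ P, (a < z ∧ f a < z) ∨ (z < a ∧ z < f a) := by
    by_contra hns
    push Not at hns
    have hit : ∀ i, f^[i] p ∈ P ∧ (Even i → f^[i] p < z) ∧ (Odd i → z < f^[i] p) := by
      intro i
      induction i with
      | zero => simp [hp, hpz]
      | succ i ih =>
        obtain ⟨h1, h2, h3⟩ := ih
        rw [iterate_succ_apply']
        have hm := hP.maps _ h1
        have hne : f (f^[i] p) ≠ z := fun e => hzP (e ▸ hm)
        refine ⟨hm, fun he => ?_, fun he => ?_⟩
        · have : Odd i := by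
            rw [Nat.even_add_one, Nat.not_even_iff_odd] at he; exact he
          exact lt_of_le_of_ne ((hns _ h1).2 (h3 this)) hne
        · have : Even i := by
            rw [Nat.odd_add_one, Nat.not_odd_iff_even] at he; exact he
          exact lt_of_le_of_ne ((hns _ h1).1 (h2 this)) hne.symm
    have := (hit n₀).2.2 ho₀
    have e : f^[n₀] p = p := by rw [← hP.per p hp]; exact isPeriodicPt_minimalPeriod f p
    rw [e] at this
    linarith
  obtain ⟨r1, r2⟩ := hP.nonswitch hf hn₀ hp hq hpz hzq hz hfp hfq hL hR ha hns
  constructor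
  · intro m hm he
    obtain ⟨k, rfl⟩ := he
    rw [← two_mul]
    exact r1 k (by omega)
  · intro m hm hnm
    rcases Nat.lt_or_ge n₀ m with h | h
    · exact r2 ho₀ hmin m hm h
    · obtain rfl : n₀ = m := by omega
      exact hp₀

lemma per_iterate {f : ℝ → ℝ} {n : ℕ} (k : ℕ) (h : Per f n) :
    Per f^[2 ^ k] (n / Nat.gcd n (2 ^ k)) := by
  obtain ⟨hn, x, hx⟩ := h
  refine ⟨Nat.div_pos (Nat.gcd_le_left _ hn) (Nat.gcd_pos_of_pos_left _ hn), x, ?_⟩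
  rw [minimalPeriod_iterate_eq_div_gcd (by positivity), hx]

lemma per_of_iterate {f : ℝ → ℝ} {m k : ℕ} (h : Per f^[2 ^ k] m) :
    ∃ j ≤ k, Per f (2 ^ j * m) ∧ (Even m → j = k) := by
  obtain ⟨hm, x, hx⟩ := h
  rw [minimalPeriod_iterate_eq_div_gcd (by positivity)] at hx
  set N := minimalPeriod f x with hN
  obtain ⟨j, hj, hjg⟩ := (Nat.dvd_prime_pow Nat.prime_two).1 (Nat.gcd_dvd_right N (2 ^ k))
  have hNe : N = 2 ^ j * m := by
    rw [← hx, ← hjg, Nat.mul_div_cancel' (Nat.gcd_dvd_left _ _)]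
  refine ⟨j, hj, ⟨by positivity, x, by rw [← hNe]⟩, ?_⟩
  intro he
  by_contra hne
  have h1 : 2 ^ (j + 1) ∣ Nat.gcd N (2 ^ k) := by
    apply Nat.dvd_gcd
    · rw [hNe, pow_succ]
      exact Nat.mul_dvd_mul_left _ he.two_dvd
    · exact pow_dvd_pow 2 (by omega)
  rw [hjg] at h1
  have := (Nat.pow_dvd_pow_iff_le_right (by norm_num)).1 h1
  omega

lemma per_iterate_mul {f : ℝ → ℝ} {r : ℕ} (k : ℕ) (h : Per f (2 ^ k * r)) : Per f^[2 ^ k] r := by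
  have := per_iterate k h
  rwa [Nat.gcd_eq_right (Dvd.intro _ rfl), Nat.mul_div_cancel_left _ (by positivity)] at this

lemma per_of_iterate_even {f : ℝ → ℝ} {m k : ℕ} (he : Even m) (h : Per f^[2 ^ k] m) :
    Per f (2 ^ k * m) := by
  obtain ⟨j, -, h1, h2⟩ := per_of_iterate h
  rwa [h2 he] at h1

/-- Levels above. -/
lemma force_up {f : ℝ → ℝ} (hf : Continuous f) {k l r s : ℕ} (hr : Odd r) (hr1 : 1 < r)
    (hs : 0 < s) (hkl : k < l) (h : Per f (2 ^ k * r)) : Per f (2 ^ l * s) := by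
  have h1 := per_iterate_mul k h
  have h2 := (per_odd (hf.iterate _) hr hr1 h1).1 (2 ^ (l - k) * s) (by positivity)
    (by rw [Nat.even_mul, Nat.even_pow]; left; exact ⟨even_two, by omega⟩)
  have h3 := per_of_iterate_even
    (by rw [Nat.even_mul, Nat.even_pow]; left; exact ⟨even_two, by omega⟩) h2
  rwa [← mul_assoc, ← pow_add, show k + (l - k) = l by omega] at h3

lemma force_same {f : ℝ → ℝ} (hf : Continuous f) {k r s : ℕ} (hr : Odd r) (hr1 : 1 < r)
    (hs : Odd s) (hrs : r < s) (h : Per f (2 ^ k * r)) : Per f (2 ^ k * s) := by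
  have h1 := per_iterate_mul k h
  have h2 := (per_odd (hf.iterate _) hr hr1 h1).2 s hs hrs.le
  obtain ⟨j, hj, h3, -⟩ := per_of_iterate h2
  rcases Nat.lt_or_ge j k with h4 | h4
  · exact force_up hf hs (by omega) (by omega) h4 h3
  · obtain rfl : j = k := by omega
    exact h3

lemma force_pow {f : ℝ → ℝ} (hf : Continuous f) {l n : ℕ} (hn : ¬ n ∣ 2 ^ l)
    (h : Per f n) : Per f (2 ^ l) := by
  rcases l with _ | l
  · exact per_one hf h
  · have h1 := per_iterate l h
    have h2 : 2 ≤ n / Nat.gcd n (2 ^ l) := by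
      by_contra hc
      have h3 : n / Nat.gcd n (2 ^ l) = 1 := by have := h1.1; omega
      have h4 := Nat.mul_div_cancel' (Nat.gcd_dvd_left n (2 ^ l))
      rw [h3, mul_one] at h4
      apply hn
      rw [← h4]
      exact (Nat.gcd_dvd_right _ _).trans (pow_dvd_pow 2 (by omega))
    have h3 := per_of_iterate_even even_two (per_two (hf.iterate _) h2 h1)
    rwa [← pow_succ] at h3

lemma decomp (n : ℕ) : n = 2 ^ (n.factorization 2) * oddPart n :=
  (Nat.ordProj_mul_ordCompl_eq_self n 2).symm

lemma odd_oddPart {n : ℕ} (hn : 0 < n) : Odd (oddPart n) := by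
  rw [← Nat.not_even_iff_odd, even_iff_two_dvd]
  exact Nat.not_dvd_ordCompl Nat.prime_two (by omega)

lemma force {f : ℝ → ℝ} (hf : Continuous f) {m n : ℕ} (hm : 0 < m) (hmn : SharkLt m n)
    (h : Per f n) : Per f m := by
  have hom := odd_oddPart hm
  have hon := odd_oddPart h.1
  have dm := decomp m
  have dn := decomp n
  have hm1 : oddPart m ≠ 1 → 1 < oddPart m := fun h => by have := hom.pos; omega
  have hn1 : oddPart n ≠ 1 → 1 < oddPart n := fun h => by have := hon.pos; omega
  rcases hmn with ⟨h1, h2, h3⟩ | ⟨h1, h2⟩ | ⟨h1, h2, h3 | ⟨h3, h4⟩⟩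
  · rw [h1, mul_one] at dm
    rw [dm]
    refine force_pow hf (fun hd => ?_) h
    rw [← dm] at hd
    exact absurd (Nat.le_of_dvd hm hd) (by omega)
  · rw [h1, mul_one] at dm
    rw [dm]
    refine force_pow hf (fun hd => h2 ?_) h
    have hd2 : oddPart n ∣ 2 ^ (m.factorization 2) := by
      refine Dvd.dvd.trans ?_ hd
      exact Dvd.intro_left _ dn.symm
    obtain ⟨j, -, hj⟩ := (Nat.dvd_prime_pow Nat.prime_two).1 hd2
    rw [hj] at hon ⊢
    rcases j with _ | j
    · rfl
    · rw [← Nat.not_even_iff_odd, Nat.even_pow] at hon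
      simp at hon
  · rw [dn] at h
    rw [dm]
    exact force_up hf hon (hn1 h2) (hom.pos) h3 h
  · rw [dn] at h
    rw [dm, h3]
    exact force_same hf hon (hn1 h2) hom h4 h

lemma shark_pos {m n : ℕ} (hn : 0 < n) (h : SharkLt m n) : 0 < m := by
  rcases Nat.eq_zero_or_pos m with rfl | hm
  · exfalso
    have : oddPart 0 = 0 := by simp [oddPart]
    rcases h with ⟨h1, -⟩ | ⟨h1, -⟩ | ⟨-, -, h1 | ⟨-, h1⟩⟩
    · omega
    · omega
    · simp at h1
    · omega
  · exact hm

end Shark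

end

open Shark

/-- **Sharkovsky's Theorem for the real line.** For a continuous map `f : ℝ → ℝ` the set
of periods of all cycles of `f` is empty or equals `S(n)` for some `n ∈ ℕ ∪ {2^∞}`. -/
theorem sharkovsky_real_line (f : ℝ → ℝ) (hf : Continuous f) :
    periodsOn f Set.univ = ∅ ∨
    (∃ n : ℕ, 0 < n ∧ periodsOn f Set.univ = sharkSegment n) ∨
    periodsOn f Set.univ = {m : ℕ | ∃ k : ℕ, m = 2 ^ k} := by
  classical
  have hmem : ∀ n, n ∈ periodsOn f Set.univ ↔ Per f n := by
    intro n
    simp [periodsOn, Per]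
  -- a period that is maximal in the ordering yields a segment
  have key : ∀ n, Per f n → (∀ m, Per f m → SharkLt m n ∨ m = n) →
      (∃ n : ℕ, 0 < n ∧ periodsOn f Set.univ = sharkSegment n) := by
    intro n hn hmax
    refine ⟨n, hn.1, ?_⟩
    ext m
    rw [hmem]
    constructor
    · exact hmax m
    · rintro (h | rfl)
      · exact force hf (shark_pos hn.1 h) h hn
      · exact hn
  by_cases hne : ∃ n, Per f n
  swap
  · left
    ext n
    rw [hmem]
    simp only [Set.mem_empty_iff_false, iff_false]
    exact fun h => hne ⟨n, h⟩
  right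
  by_cases hodd : ∃ n, Per f n ∧ oddPart n ≠ 1
  · left
    have hex : ∃ k, ∃ n, Per f n ∧ oddPart n ≠ 1 ∧ n.factorization 2 = k := by
      obtain ⟨n, h1, h2⟩ := hodd
      exact ⟨_, n, h1, h2, rfl⟩
    have hks := Nat.find_spec hex
    have hkm : ∀ n, Per f n → oddPart n ≠ 1 → Nat.find hex ≤ n.factorization 2 :=
      fun n h1 h2 => Nat.find_min' hex ⟨n, h1, h2, rfl⟩
    generalize Nat.find hex = k at hks hkm
    have hex2 : ∃ r, ∃ n, Per f n ∧ oddPart n ≠ 1 ∧ n.factorization 2 = k ∧ oddPart n = r := by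
      obtain ⟨n, h1, h2, h3⟩ := hks
      exact ⟨_, n, h1, h2, h3, rfl⟩
    obtain ⟨n, h1, h2, h3, h4⟩ := Nat.find_spec hex2
    have hrm : ∀ n, Per f n → oddPart n ≠ 1 → n.factorization 2 = k → Nat.find hex2 ≤ oddPart n :=
      fun n h1 h2 h3 => Nat.find_min' hex2 ⟨n, h1, h2, h3, rfl⟩
    rw [← h4] at hrm
    refine key n h1 ?_
    intro m hm
    by_cases hm1 : oddPart m = 1
    · exact Or.inl (Or.inr (Or.inl ⟨hm1, h2⟩))
    · have ha := hkm m hm hm1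
      rcases Nat.lt_or_ge k (m.factorization 2) with hb | hb
      · exact Or.inl (Or.inr (Or.inr ⟨hm1, h2, Or.inl (by omega)⟩))
      · have hc : m.factorization 2 = k := by omega
        have hd := hrm m hm hm1 hc
        rcases Nat.lt_or_ge (oddPart n) (oddPart m) with he | he
        · exact Or.inl (Or.inr (Or.inr ⟨hm1, h2, Or.inr ⟨by omega, he⟩⟩))
        · right
          rw [decomp m, decomp n, hc, h3, le_antisymm he hd]
  · push Not at hodd
    by_cases hb : ∃ B, ∀ n, Per f n → n ≤ B
    · left
      obtain ⟨B, hB⟩ := hb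
      obtain ⟨n₀, hn₀⟩ := hne
      have hs := Nat.findGreatest_spec (P := Per f) (hB n₀ hn₀) hn₀
      refine key _ hs ?_
      intro m hm
      have hle := Nat.le_findGreatest (P := Per f) (hB m hm) hm
      rcases hle.lt_or_eq with h | h
      · exact Or.inl (Or.inl ⟨hodd m hm, hodd _ hs, h⟩)
      · exact Or.inr h
    · right
      push Not at hb
      ext m
      rw [hmem]
      constructor
      · intro hm
        refine ⟨m.factorization 2, ?_⟩
        have := decomp m
        rwa [hodd m hm, mul_one] at this
      · rintro ⟨k, rfl⟩
        obtain ⟨n, hn, hlt⟩ := hb (2 ^ k)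
        exact force_pow hf (fun hd => absurd (Nat.le_of_dvd (by positivity) hd) (by omega)) hn
end

section
/- Let I be a closed interval, let f : I → I be a continuous map, and let m, n be natural numbers with m <_s n in the Sharkovsky ordering. If f has a cycle of period n, then f has a cycle of period m. In other words, forcing among periods is a linear ordering given by the Sharkovsky ordering. -/
namespace Shark
open Function Set

/-- Zero of a difference: if `F ≥ G` at one end and `F ≤ G` at the other, they agree in between. -/
lemma ivt {F G : ℝ → ℝ} (hF : Continuous F) (hG : Continuous G) {p q : ℝ} (hpq : p ≤ q)
    (h1 : F p ≤ G p) (h2 : G q ≤ F q) : ∃ t, p ≤ t ∧ t ≤ q ∧ F t = G t := by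
  have h := intermediate_value_Icc hpq (f := fun x => F x - G x) (hF.sub hG).continuousOn
  obtain ⟨t, ht, h0⟩ := h (show (0 : ℝ) ∈ _ from ⟨by simpa using h1, by simpa using h2⟩)
  exact ⟨t, ht.1, ht.2, by simpa [sub_eq_zero] using h0⟩

lemma ivt' {F G : ℝ → ℝ} (hF : Continuous F) (hG : Continuous G) {p q : ℝ} (hpq : p ≤ q)
    (h1 : G p ≤ F p) (h2 : F q ≤ G q) : ∃ t, p ≤ t ∧ t ≤ q ∧ F t = G t := by
  obtain ⟨t, h, h', e⟩ := ivt hG hF hpq h1 h2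
  exact ⟨t, h, h', e.symm⟩

lemma least_sol {F G : ℝ → ℝ} (hF : Continuous F) (hG : Continuous G) {p q t : ℝ}
    (h1 : p ≤ t) (h2 : t ≤ q) (h3 : F t = G t) :
    ∃ s, p ≤ s ∧ s ≤ q ∧ F s = G s ∧ ∀ y, p ≤ y → y < s → F y ≠ G y := by
  have hc : IsCompact (Icc p q ∩ {x | F x = G x}) :=
    isCompact_Icc.inter_right (isClosed_eq hF hG)
  obtain ⟨s, hs, hl⟩ := hc.exists_isLeast ⟨t, ⟨h1, h2⟩, h3⟩
  refine ⟨s, hs.1.1, hs.1.2, hs.2, fun y hy hys e => ?_⟩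
  exact absurd (hl ⟨⟨hy, hys.le.trans hs.1.2⟩, e⟩) (not_le.2 hys)

lemma greatest_sol {F G : ℝ → ℝ} (hF : Continuous F) (hG : Continuous G) {p q t : ℝ}
    (h1 : p ≤ t) (h2 : t ≤ q) (h3 : F t = G t) :
    ∃ s, p ≤ s ∧ s ≤ q ∧ F s = G s ∧ ∀ y, s < y → y ≤ q → F y ≠ G y := by
  have hc : IsCompact (Icc p q ∩ {x | F x = G x}) :=
    isCompact_Icc.inter_right (isClosed_eq hF hG)
  obtain ⟨s, hs, hl⟩ := hc.exists_isGreatest ⟨t, ⟨h1, h2⟩, h3⟩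
  refine ⟨s, hs.1.1, hs.1.2, hs.2, fun y hy hys e => ?_⟩
  exact absurd (hl ⟨⟨hs.1.1.trans hy.le, hys⟩, e⟩) (not_le.2 hy)

/-- If `F` takes value `l` at `p` and `h` at `q ≥ p`, some subinterval maps exactly onto `[l,h]`. -/
lemma sub_aux {F : ℝ → ℝ} (hF : Continuous F) {p q l h : ℝ} (hpq : p ≤ q) (hlh : l ≤ h)
    (hp : F p = l) (hq : F q = h) :
    ∃ c d, c ≤ d ∧ p ≤ c ∧ d ≤ q ∧ (∀ x ∈ Icc c d, F x ∈ Icc l h) ∧ F c = l ∧ F d = h := by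
  obtain ⟨d, hd1, hd2, hd3, hd4⟩ :=
    least_sol hF (continuous_const (y := h)) hpq le_rfl hq
  obtain ⟨c, hc1, hc2, hc3, hc4⟩ :=
    greatest_sol hF (continuous_const (y := l)) le_rfl hd1 hp
  refine ⟨c, d, hc2, hc1, hd2, fun x hx => ⟨?_, ?_⟩, hc3, hd3⟩
  · by_contra hlt
    push Not at hlt
    obtain ⟨t, ht1, ht2, ht3⟩ :=
      ivt hF (continuous_const (y := l)) hx.2 hlt.le (by rw [hd3]; exact hlh)
    have : c ≠ x := by rintro rfl; exact absurd hc3 hlt.ne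
    exact hc4 t (lt_of_lt_of_le (lt_of_le_of_ne hx.1 this) ht1) ht2 ht3
  · by_contra hlt
    push Not at hlt
    obtain ⟨t, ht1, ht2, ht3⟩ :=
      ivt hF (continuous_const (y := h)) hx.1 (by rw [hc3]; exact hlh) hlt.le
    have : x ≠ d := by rintro rfl; exact absurd hd3 hlt.ne'
    exact hd4 t (hc1.trans ht1) (lt_of_le_of_lt ht2 (lt_of_le_of_ne hx.2 this)) ht3

lemma sub_cover {F : ℝ → ℝ} (hF : Continuous F) {p q l h : ℝ} (hlh : l ≤ h)
    (hc : Icc l h ⊆ F '' Icc p q) :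
    ∃ c d, c ≤ d ∧ p ≤ c ∧ d ≤ q ∧ (∀ x ∈ Icc c d, F x ∈ Icc l h) ∧
      Icc l h ⊆ F '' Icc c d := by
  obtain ⟨u, hu, hul⟩ := hc (left_mem_Icc.2 hlh)
  obtain ⟨w, hw, hwh⟩ := hc (right_mem_Icc.2 hlh)
  rcases le_total u w with huw | huw
  · obtain ⟨c, d, h1, h2, h3, h4, h5, h6⟩ := sub_aux hF huw hlh hul hwh
    refine ⟨c, d, h1, hu.1.trans h2, h3.trans hw.2, h4, ?_⟩
    rw [← h5, ← h6]
    exact intermediate_value_Icc h1 hF.continuousOn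
  · obtain ⟨c, d, h1, h2, h3, h4, h5, h6⟩ := sub_aux (F := fun x => - F x) hF.neg huw
      (neg_le_neg hlh) (by rw [hwh]) (by rw [hul])
    refine ⟨c, d, h1, hw.1.trans h2, h3.trans hu.2, fun x hx => ?_, ?_⟩
    · have := h4 x hx
      exact ⟨by linarith [this.2], by linarith [this.1]⟩
    · have h5' : F c = h := by linarith
      have h6' : F d = l := by linarith
      rw [← h5', ← h6']
      exact intermediate_value_Icc' h1 hF.continuousOn

lemma chain_s3 {g : ℝ → ℝ} (hg : Continuous g) (lo hi : ℕ → ℝ) (hle : ∀ i, lo i ≤ hi i) (n : ℕ)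
    (hc : ∀ i < n, Icc (lo (i + 1)) (hi (i + 1)) ⊆ g '' Icc (lo i) (hi i)) :
    ∃ c d, c ≤ d ∧ (∀ i ≤ n, ∀ x ∈ Icc c d, g^[i] x ∈ Icc (lo i) (hi i)) ∧
      Icc (lo n) (hi n) ⊆ g^[n] '' Icc c d := by
  induction n with
  | zero =>
    refine ⟨lo 0, hi 0, hle 0, fun i hi' x hx => ?_, by simp⟩
    obtain rfl : i = 0 := by omega
    simpa using hx
  | succ n ih =>
    obtain ⟨c, d, h1, h2, h3⟩ := ih (fun i hi' => hc i (by omega))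
    have h4 : Icc (lo (n + 1)) (hi (n + 1)) ⊆ g^[n + 1] '' Icc c d := by
      intro y hy
      obtain ⟨w, hw, rfl⟩ := hc n (by omega) hy
      obtain ⟨x, hx, rfl⟩ := h3 hw
      exact ⟨x, hx, by rw [iterate_succ_apply']⟩
    obtain ⟨c', d', k1, k2, k3, k4, k5⟩ := sub_cover (hg.iterate (n + 1)) (hle _) h4
    refine ⟨c', d', k1, fun i hi' x hx => ?_, k5⟩
    rcases Nat.lt_or_ge i (n + 1) with h | h
    · exact h2 i (by omega) x ⟨k2.trans hx.1, hx.2.trans k3⟩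
    · obtain rfl : i = n + 1 := by omega
      exact k4 x hx

lemma fixed_of_cover {F : ℝ → ℝ} (hF : Continuous F) {c d : ℝ} (hcd : c ≤ d)
    (h : Icc c d ⊆ F '' Icc c d) : ∃ x ∈ Icc c d, F x = x := by
  obtain ⟨p, hp, hpc⟩ := h (left_mem_Icc.2 hcd)
  obtain ⟨q, hq, hqd⟩ := h (right_mem_Icc.2 hcd)
  rcases le_total p q with hpq | hpq
  · obtain ⟨t, h1, h2, h3⟩ := ivt hF continuous_id hpq (by rw [hpc]; exact hp.1)
      (by rw [hqd]; exact hq.2)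
    exact ⟨t, ⟨hp.1.trans h1, h2.trans hq.2⟩, h3⟩
  · obtain ⟨t, h1, h2, h3⟩ := ivt' hF continuous_id hpq (by rw [hqd]; exact hq.2)
      (by rw [hpc]; exact hp.1)
    exact ⟨t, ⟨hq.1.trans h1, h2.trans hp.2⟩, h3⟩

/-- The minimum of a cycle. -/
lemma exists_min {f : ℝ → ℝ} {x : ℝ} {m : ℕ} (hm : 0 < m) (hx : minimalPeriod f x = m) :
    ∃ a, minimalPeriod f a = m ∧ ∀ n, a ≤ f^[n] a := by
  have hper : x ∈ periodicPts f := minimalPeriod_pos_iff_mem_periodicPts.1 (by omega)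
  obtain ⟨i, hi, hmin⟩ := Finset.exists_min_image (Finset.range m) (fun i => f^[i] x)
    ⟨0, Finset.mem_range.2 hm⟩
  refine ⟨f^[i] x, by rw [minimalPeriod_apply_iterate hper, hx], fun n => ?_⟩
  rw [← iterate_add_apply, ← iterate_mod_minimalPeriod_eq (n := n + i), hx]
  exact hmin _ (Finset.mem_range.2 (Nat.mod_lt _ hm))

lemma struct1 {f : ℝ → ℝ} (hf : Continuous f) {x : ℝ} {m : ℕ} (hm : 3 ≤ m)
    (hx : minimalPeriod f x = m) :
    ∃ a b v z, a < v ∧ v < z ∧ z < b ∧ f z = z ∧ f v = b ∧ f b = a ∧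
      minimalPeriod f a = m ∧ f^[m - 1] a = b ∧ ∀ n, a ≤ f^[n] a := by
  obtain ⟨a, ha, hmin⟩ := exists_min (by omega) hx
  set b := f^[m - 1] a with hb
  have hfm : f^[m] a = a := by rw [← ha]; exact iterate_minimalPeriod
  have hfb : f b = a := by
    rw [hb, ← iterate_succ_apply' f, show (m - 1).succ = m by omega, hfm]
  have hab : a < b := by
    refine lt_of_le_of_ne (hmin _) fun h => ?_
    rw [← h] at hfb
    have := minimalPeriod_eq_one_iff_isFixedPt.2 hfb
    omega
  have hexc : ∃ c, a ≤ c ∧ c < b ∧ b ≤ f c := by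
    by_contra hno
    push Not at hno
    have : ∀ n, f^[n] a < b := by
      intro n
      induction n with
      | zero => simpa using hab
      | succ n ih => rw [iterate_succ_apply']; exact hno _ (hmin n) ih
    exact lt_irrefl _ (this (m - 1))
  obtain ⟨c, hac, hcb, hfc⟩ := hexc
  obtain ⟨z, hz1, hz2, hz3⟩ := ivt' hf continuous_id hcb.le (by simp only [id]; linarith)
    (by simp only [id]; linarith)
  simp only [id] at hz3
  have hzb : z < b := lt_of_le_of_ne hz2 (by rintro rfl; linarith)
  obtain ⟨v, hv1, hv2, hv3⟩ := ivt' hf (continuous_const (y := b)) hz1 hfc (by linarith)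
  have hvz : v < z := lt_of_le_of_ne hv2 (by rintro rfl; linarith)
  have hav : a < v := by
    refine lt_of_le_of_ne (hac.trans hv1) ?_
    rintro rfl
    have h2 : IsPeriodicPt f 2 a := by
      show f^[2] a = a
      simp [hv3, hfb]
    have := h2.minimalPeriod_le (by norm_num)
    omega
  exact ⟨a, b, v, z, hav, hvz, hzb, hz3, hv3, hfb, ha, rfl, hmin⟩

lemma struct2 {f : ℝ → ℝ} (hf : Continuous f) {v z : ℝ} (hvz : v < z) (hz : f z = z)
    (hv : f (f v) < v) (hfv : z < f v) :
    ∃ z0, v < z0 ∧ z0 ≤ z ∧ f (f z0) = z0 ∧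
      ∀ y, v ≤ y → y < z0 → f (f y) < y ∧ z < f y := by
  have hff : Continuous fun y => f (f y) := hf.comp hf
  obtain ⟨z0, h1, h2, h3, h4⟩ := least_sol hff continuous_id hvz.le le_rfl
    (show f (f z) = id z by simp [hz])
  simp only [id] at h3 h4
  have hlt : ∀ y, v ≤ y → y < z0 → f (f y) < y := by
    intro y hy1 hy2
    by_contra hge
    push Not at hge
    obtain ⟨t, ht1, ht2, ht3⟩ := ivt hff continuous_id hy1 hv.le hge
    exact h4 t ht1 (ht2.trans_lt hy2) ht3
  refine ⟨z0, lt_of_le_of_ne h1 (by rintro rfl; linarith), h2, h3, fun y hy1 hy2 =>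
    ⟨hlt y hy1 hy2, ?_⟩⟩
  by_contra hge
  push Not at hge
  obtain ⟨t, ht1, ht2, ht3⟩ := ivt' hf (continuous_const (y := z)) hy1 hfv.le hge
  have := hlt t ht1 (ht2.trans_lt hy2)
  rw [ht3, hz] at this
  linarith

/-- Any period at least three forces period two. -/
lemma period_two {f : ℝ → ℝ} (hf : Continuous f) {x : ℝ} {m : ℕ} (hm : 3 ≤ m)
    (hx : minimalPeriod f x = m) : ∃ y, minimalPeriod f y = 2 := by
  obtain ⟨a, b, v, z, hav, hvz, hzb, hz, hv, hb, ha, -, hmin⟩ := struct1 hf hm hx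
  obtain ⟨z0, h1, h2, h3, h4⟩ := struct2 hf hvz hz (by rw [hv, hb]; exact hav) (by rw [hv]; exact hzb)
  have hff : Continuous fun y => f (f y) := hf.comp hf
  obtain ⟨t, t1, t2, t3⟩ := ivt' hff continuous_id hav.le (by simpa using hmin 2)
    (by simp only [id, hv, hb]; exact hav.le)
  obtain ⟨y, y1, y2, y3, y4⟩ := greatest_sol hff continuous_id t1 t2 t3
  simp only [id] at y3 y4
  have hyv : y < v := lt_of_le_of_ne y2 (by rintro rfl; rw [hv, hb] at y3; linarith)
  have hfy : z ≤ f y := by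
    by_contra hlt
    push Not at hlt
    obtain ⟨s, s1, s2, s3⟩ := ivt hf (continuous_const (y := z)) y2 hlt.le (by rw [hv]; exact hzb.le)
    have hys : y < s := lt_of_le_of_ne s1 (by rintro rfl; linarith)
    obtain ⟨r, r1, r2, r3⟩ := ivt' hff continuous_id s2 (by simp only [id]; rw [s3, hz]; linarith)
      (by simp only [id]; rw [hv, hb]; linarith)
    exact y4 r (hys.trans_le r1) r2 r3
  refine ⟨y, ?_⟩
  have hp : IsPeriodicPt f 2 y := by
    show f^[2] y = y
    simpa using y3
  have hd := hp.minimalPeriod_dvd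
  rcases (Nat.dvd_prime Nat.prime_two).1 hd with h | h
  · have := minimalPeriod_eq_one_iff_isFixedPt.1 h
    have : f y = y := this
    linarith
  · exact h

/-- An odd period greater than one forces all even periods. -/
lemma period_even {f : ℝ → ℝ} (hf : Continuous f) {x : ℝ} {m : ℕ} (hm : 3 ≤ m) (hodd : Odd m)
    (hx : minimalPeriod f x = m) {k : ℕ} (hk : 1 ≤ k) : ∃ y, minimalPeriod f y = 2 * k := by
  rcases Nat.eq_or_lt_of_le hk with rfl | hk
  · exact period_two hf hm hx
  obtain ⟨a, b, v, z, hav, hvz, hzb, hz, hv, hb, ha, hab, hmin⟩ := struct1 hf hm hx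
  obtain ⟨z0, h1, h2, h3, h4⟩ := struct2 hf hvz hz (by rw [hv, hb]; exact hav) (by rw [hv]; exact hzb)
  have hff : Continuous f^[2] := hf.iterate 2
  have e2 : ∀ y, f^[2] y = f (f y) := fun y => rfl
  have hq : ∃ q, a ≤ q ∧ q ≤ v ∧ z0 ≤ f^[2] q := by
    by_contra hno
    push Not at hno
    have : ∀ n, f^[2 * n] a < z0 := by
      intro n
      induction n with
      | zero => simpa using hav.trans h1
      | succ n ih =>
        rw [show 2 * (n + 1) = 2 + 2 * n by ring, iterate_add_apply]
        rcases le_total (f^[2 * n] a) v with h | h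
        · exact hno _ (hmin _) h
        · exact (h4 _ h ih).1.trans ih
    obtain ⟨r, rfl⟩ := hodd
    have := this r
    rw [Nat.add_sub_cancel] at hab
    linarith
  obtain ⟨q, q1, q2, q3⟩ := hq
  obtain ⟨t, t1, t2, t3⟩ := ivt' hff (continuous_const (y := z0)) q2 q3
    (by rw [e2, hv, hb]; linarith)
  obtain ⟨d, d1, d2, d3, d4⟩ := greatest_sol hff (continuous_const (y := z0)) t1 t2 t3
  have hdv : d < v := lt_of_le_of_ne d2 (by rintro rfl; rw [e2, hv, hb] at d3; linarith)
  have hside : ∀ y, d ≤ y → y ≤ z0 → z ≤ f y := by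
    intro y y1 y2
    by_contra hlt
    push Not at hlt
    rcases le_total y v with hyv | hyv
    · obtain ⟨s, s1, s2, s3⟩ := ivt hf (continuous_const (y := z)) hyv hlt.le
        (by rw [hv]; exact hzb.le)
      have hys : y < s := lt_of_le_of_ne s1 (by rintro rfl; linarith)
      obtain ⟨r, r1, r2, r3⟩ := ivt' hff (continuous_const (y := z0)) s2
        (by rw [e2, s3, hz]; linarith) (by rw [e2, hv, hb]; linarith)
      exact d4 r (y1.trans_lt (hys.trans_le r1)) r2 r3
    · obtain ⟨s, s1, s2, s3⟩ := ivt' hf (continuous_const (y := z)) hyv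
        (by rw [hv]; exact hzb.le) hlt.le
      have hys : s < y := lt_of_le_of_ne s2 (by rintro rfl; linarith)
      have := (h4 s s1 (hys.trans_le y2)).2
      linarith
  -- horseshoe
  have cov1 : Icc d z0 ⊆ f^[2] '' Icc d v := by
    refine Subset.trans ?_ (intermediate_value_Icc' d2 hff.continuousOn)
    rw [d3, e2, hv, hb]
    exact Icc_subset_Icc (q1.trans d1) le_rfl
  have cov2 : Icc d z0 ⊆ f^[2] '' Icc v z0 := by
    refine Subset.trans ?_ (intermediate_value_Icc h1.le hff.continuousOn)
    rw [e2, e2, h3, hv, hb]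
    exact Icc_subset_Icc (q1.trans d1) le_rfl
  let lo : ℕ → ℝ := fun i => if i = 0 ∨ i = k then d else v
  let hi : ℕ → ℝ := fun i => if i = 0 ∨ i = k then v else z0
  have hsub : ∀ i, Icc (lo i) (hi i) ⊆ Icc d z0 := by
    intro i
    by_cases h : i = 0 ∨ i = k
    · simp only [lo, hi, if_pos h]; exact Icc_subset_Icc le_rfl h1.le
    · simp only [lo, hi, if_neg h]; exact Icc_subset_Icc d2 le_rfl
  have hcov : ∀ i, Icc d z0 ⊆ f^[2] '' Icc (lo i) (hi i) := by
    intro i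
    by_cases h : i = 0 ∨ i = k
    · simp only [lo, hi, if_pos h]; exact cov1
    · simp only [lo, hi, if_neg h]; exact cov2
  have hle : ∀ i, lo i ≤ hi i := by
    intro i
    by_cases h : i = 0 ∨ i = k
    · simp only [lo, hi, if_pos h]; exact d2
    · simp only [lo, hi, if_neg h]; exact h1.le
  obtain ⟨c, e, c1, c2, c3⟩ := chain_s3 hff lo hi hle k (fun i _ => (hsub _).trans (hcov i))
  have hlk : lo k = lo 0 := by simp [lo]
  have hhk : hi k = hi 0 := by simp [hi]
  obtain ⟨y, hy, hfix⟩ := fixed_of_cover (hff.iterate k) c1 (Subset.trans (fun w hw => by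
    have := c2 0 (by omega) w hw
    rw [hlk, hhk]; simpa using this) c3)
  have y0 : y ∈ Icc d v := by simpa [lo, hi] using c2 0 (by omega) y hy
  have yi : ∀ i, 0 < i → i < k → (f^[2])^[i] y ∈ Icc v z0 := by
    intro i i1 i2
    have := c2 i i2.le y hy
    have hn : ¬ (i = 0 ∨ i = k) := by omega
    simpa only [lo, hi, if_neg hn] using this
  have yv : y ≠ v := by
    rintro rfl
    have := (yi 1 (by omega) hk).1
    rw [iterate_one, e2, hv, hb] at this
    linarith
  have hpk : IsPeriodicPt f^[2] k y := hfix
  have hper : minimalPeriod f^[2] y = k := by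
    have hle' := hpk.minimalPeriod_le (by omega)
    have hpos := hpk.minimalPeriod_pos (by omega)
    by_contra hne
    have := (yi _ hpos (by omega)).1
    rw [iterate_minimalPeriod] at this
    exact yv (le_antisymm y0.2 this)
  refine ⟨y, ?_⟩
  have hyp : y ∈ periodicPts f := by
    refine mk_mem_periodicPts (n := 2 * k) (by omega) ?_
    show f^[2 * k] y = y
    rw [iterate_mul]; exact hfix
  have hN := minimalPeriod_iterate_eq_div_gcd (f := f) (x := y) (n := 2) (by norm_num)
  rw [hper] at hN
  set N := minimalPeriod f y with hNdef
  rcases Nat.even_or_odd N with hE | hO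
  · rw [Nat.gcd_eq_right hE.two_dvd] at hN
    have := hE.two_dvd
    omega
  · exfalso
    have hg : Nat.gcd N 2 = 1 := (Nat.coprime_two_right.2 hO)
    rw [hg, Nat.div_one] at hN
    obtain ⟨r, hr⟩ := hO
    have hret : f^[N] y = y := iterate_minimalPeriod
    rw [hr] at hret
    replace hret : f^[(2 * r).succ] y = y := hret
    rw [iterate_succ_apply', iterate_mul] at hret
    have hin : (f^[2])^[r] y ∈ Icc d z0 := hsub r (c2 r (by omega) y hy)
    have := hside _ hin.1 hin.2
    rw [hret] at this
    linarith [y0.2]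

/-- An odd period `m > 1` forces every larger odd period. -/
lemma period_odd {f : ℝ → ℝ} (hf : Continuous f) (m : ℕ) : 3 ≤ m → Odd m →
    (∃ x, minimalPeriod f x = m) → ∀ p, Odd p → m < p → ∃ y, minimalPeriod f y = p := by
  induction m using Nat.strong_induction_on with
  | _ m ih =>
  rintro hm hodd ⟨x, hx⟩ p hp hmp
  obtain ⟨a, b, v, z, hav, hvz, hzb, hz, hv, hb, ha, hab, hmin⟩ := struct1 hf hm hx
  obtain ⟨z0, h1, h2, h3, h4⟩ := struct2 hf hvz hz (by rw [hv, hb]; exact hav) (by rw [hv]; exact hzb)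
  have hff : Continuous f^[2] := hf.iterate 2
  have e2 : ∀ y, f^[2] y = f (f y) := fun y => rfl
  have hpre : ∀ y, ∃ y', v ≤ y → y < z0 → y < y' ∧ y' < z0 ∧ f^[2] y' = y := by
    intro y
    by_cases hy : v ≤ y ∧ y < z0
    · obtain ⟨t, t1, t2, t3⟩ := ivt hff (continuous_const (y := y)) hy.2.le
        (h4 y hy.1 hy.2).1.le (by rw [e2, h3]; exact hy.2.le)
      refine ⟨t, fun _ _ => ⟨lt_of_le_of_ne t1 ?_, lt_of_le_of_ne t2 ?_, t3⟩⟩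
      · rintro rfl; have := (h4 y hy.1 hy.2).1; rw [e2] at t3; linarith
      · rintro rfl; rw [e2, h3] at t3; linarith [hy.2]
    · exact ⟨0, fun a b => absurd ⟨a, b⟩ hy⟩
  choose h hh using hpre
  set s : ℕ → ℝ := fun j => h^[j] v with hs
  have s0 : s 0 = v := rfl
  have ssucc : ∀ j, s (j + 1) = h (s j) := fun j => iterate_succ_apply' h j v
  have sm : ∀ j, v ≤ s j ∧ s j < z0 := by
    intro j
    induction j with
    | zero => exact ⟨le_rfl, h1⟩
    | succ j ihj =>
      have := hh (s j) ihj.1 ihj.2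
      rw [ssucc]; exact ⟨ihj.1.trans this.1.le, this.2.1⟩
  have slt : ∀ j, s j < s (j + 1) := fun j => by
    rw [ssucc]; exact (hh (s j) (sm j).1 (sm j).2).1
  have smono : StrictMono s := strictMono_nat_of_lt_succ slt
  have sf : ∀ j, f^[2] (s (j + 1)) = s j := fun j => by
    rw [ssucc]; exact (hh (s j) (sm j).1 (sm j).2).2.2
  have sff : ∀ j, f^[2 * j] (s j) = v := by
    intro j
    induction j with
    | zero => rfl
    | succ j ihj => rw [show 2 * (j + 1) = 2 * j + 2 by ring, iterate_add_apply, sf, ihj]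
  obtain ⟨k, hk⟩ : ∃ k, m + 1 = 2 * k := by
    obtain ⟨r, hr⟩ := hodd; exact ⟨r + 1, by omega⟩
  obtain ⟨i, hi⟩ : ∃ i, p = m + 2 + 2 * i := by
    obtain ⟨r, hr⟩ := hodd
    obtain ⟨r', hr'⟩ := hp
    exact ⟨r' - r - 1, by omega⟩
  have hfm : f^[m] a = a := by rw [← ha]; exact iterate_minimalPeriod
  have hcovM : Icc a b ⊆ f^[m + 2] '' Icc (s 0) (s k) := by
    have := intermediate_value_Icc (smono.monotone (Nat.zero_le k)) (hf.iterate (m + 2)).continuousOn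
    refine Subset.trans ?_ this
    have ea : f^[m + 2] (s 0) = a := by rw [iterate_add_apply, s0, e2, hv, hb, hfm]
    have eb : f^[m + 2] (s k) = b := by
      rw [show m + 2 = (2 * k) + 1 by omega, iterate_succ_apply', sff, hv]
    rw [ea, eb]
  obtain ⟨c, d, c1, c2, c3⟩ := chain_s3 hff (fun j => s (i - j)) (fun j => s (k + (i - j)))
    (fun j => smono.monotone (by omega)) i (by
      intro j hj
      have := intermediate_value_Icc (smono.monotone (show i - j ≤ k + (i - j) by omega))
        hff.continuousOn
      refine Subset.trans ?_ this
      have q : i - j = (i - (j + 1)) + 1 := by omega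
      rw [q, ← add_assoc, sf, sf])
  have hin : ∀ j ≤ i, ∀ y ∈ Icc c d, v ≤ (f^[2])^[j] y ∧ (f^[2])^[j] y < z0 := by
    intro j hj y hy
    have := c2 j hj y hy
    exact ⟨(sm _).1.trans this.1, this.2.trans_lt (sm _).2⟩
  obtain ⟨y, hy, hfix⟩ := fixed_of_cover (hf.iterate p) c1 (by
    intro w hw
    have hw0 := hin 0 (by omega) w hw
    simp only [iterate_zero, id] at hw0
    obtain ⟨u, hu, rfl⟩ := hcovM (show w ∈ Icc a b from
      ⟨by linarith, by linarith⟩)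
    simp only [Nat.sub_self, Nat.add_zero] at c3
    obtain ⟨r, hr, rfl⟩ := c3 hu
    refine ⟨r, hr, ?_⟩
    rw [hi, iterate_add_apply, iterate_mul])
  have hpp : IsPeriodicPt f p y := hfix
  have hdvd := hpp.minimalPeriod_dvd
  have hD : f^[minimalPeriod f y] y = y := iterate_minimalPeriod
  have hDodd : Odd (minimalPeriod f y) := Odd.of_dvd_nat hp hdvd
  by_cases hDp : minimalPeriod f y = p
  · exact ⟨y, hDp⟩
  set D := minimalPeriod f y with hDdef
  have hbig : 2 * i + 3 ≤ D := by
    by_contra hsm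
    obtain ⟨r, hr⟩ := hDodd
    rw [hr] at hD
    replace hD : f^[(2 * r).succ] y = y := hD
    rw [iterate_succ_apply', iterate_mul] at hD
    have q := hin r (by omega) y hy
    have q0 := hin 0 (by omega) y hy
    simp only [iterate_zero, id] at q0
    have := (h4 _ q.1 q.2).2
    rw [hD] at this
    linarith
  obtain ⟨e, he⟩ := hdvd
  have he3 : 2 ≤ e := by
    rcases e with _ | _ | e
    · omega
    · omega
    · omega
  have : D * 2 ≤ p := by rw [he]; exact Nat.mul_le_mul_left _ he3
  exact ih D (by omega) (by omega) hDodd ⟨y, rfl⟩ p hp (by omega)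

lemma lift_even {f : ℝ → ℝ} {y : ℝ} {j e : ℕ} (he : 0 < e)
    (h : minimalPeriod f^[2 ^ j] y = 2 * e) : minimalPeriod f y = 2 ^ j * (2 * e) := by
  rw [minimalPeriod_iterate_eq_div_gcd (by positivity)] at h
  set N := minimalPeriod f y
  obtain ⟨i, hi, hg⟩ := (Nat.dvd_prime_pow Nat.prime_two).1 (Nat.gcd_dvd_right N (2 ^ j))
  have hN : N = 2 ^ i * (2 * e) := by
    rw [← h, ← hg]; exact (Nat.mul_div_cancel' (Nat.gcd_dvd_left _ _)).symm
  rcases Nat.eq_or_lt_of_le hi with rfl | hlt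
  · exact hN
  · exfalso
    have h1 : 2 ^ (i + 1) ∣ N.gcd (2 ^ j) :=
      Nat.dvd_gcd ⟨e, by rw [hN]; ring⟩ (pow_dvd_pow 2 hlt)
    rw [hg, Nat.pow_dvd_pow_iff_le_right (by norm_num)] at h1
    omega

lemma down {f : ℝ → ℝ} {x : ℝ} {k q : ℕ} (h : minimalPeriod f x = 2 ^ k * q) :
    minimalPeriod f^[2 ^ k] x = q := by
  rw [minimalPeriod_iterate_eq_div_gcd (by positivity), h, Nat.gcd_eq_right (Dvd.intro _ rfl)]
  exact Nat.mul_div_cancel_left _ (by positivity)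

lemma up {f : ℝ → ℝ} (hf : Continuous f) {x : ℝ} {k q l r : ℕ} (hq : 3 ≤ q) (hqo : Odd q)
    (h : minimalPeriod f x = 2 ^ k * q) (hl : k < l) (hr : 0 < r) :
    ∃ y, minimalPeriod f y = 2 ^ l * r := by
  have hpos : 0 < 2 ^ (l - k - 1) * r := by positivity
  obtain ⟨y, hy⟩ := period_even (hf.iterate (2 ^ k)) hq hqo (down h) (k := 2 ^ (l - k - 1) * r) hpos
  refine ⟨y, ?_⟩
  rw [lift_even hpos hy]
  obtain ⟨t, rfl⟩ : ∃ t, l = k + t + 1 := ⟨l - k - 1, by omega⟩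
  rw [show k + t + 1 - k - 1 = t by omega]
  ring

lemma oddPart_spec {n : ℕ} (hn : 0 < n) :
    n = 2 ^ (n.factorization 2) * oddPart n ∧ Odd (oddPart n) := by
  refine ⟨(Nat.ordProj_mul_ordCompl_eq_self n 2).symm, ?_⟩
  rw [← Nat.not_even_iff_odd, even_iff_two_dvd]
  exact Nat.not_dvd_ordCompl Nat.prime_two hn.ne'

lemma fixed_pt {f : ℝ → ℝ} (hf : Continuous f) {x : ℝ} {n : ℕ} (hn : 0 < n)
    (hx : minimalPeriod f x = n) : ∃ y, minimalPeriod f y = 1 := by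
  rcases Nat.lt_or_ge n 3 with h | h
  · rcases (show n = 1 ∨ n = 2 by omega) with rfl | rfl
    · exact ⟨x, hx⟩
    · obtain ⟨a, ha, hmin⟩ := exists_min hn hx
      have h2 : f^[2] a = a := by rw [← ha]; exact iterate_minimalPeriod
      have h2' : f (f a) = a := h2
      have h1 : a ≤ f a := hmin 1
      obtain ⟨z, -, -, hz⟩ := ivt' hf continuous_id h1 h1 (by simp only [id]; rw [h2']; exact h1)
      exact ⟨z, minimalPeriod_eq_one_iff_isFixedPt.2 hz⟩
  · obtain ⟨a, b, v, z, -, -, -, hz, -⟩ := struct1 hf h hx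
    exact ⟨z, minimalPeriod_eq_one_iff_isFixedPt.2 hz⟩

lemma pow_two {f : ℝ → ℝ} (hf : Continuous f) {x : ℝ} {k q l : ℕ} (hqo : Odd q)
    (hx : minimalPeriod f x = 2 ^ k * q) (h : l < k ∨ 3 ≤ q) :
    ∃ y, minimalPeriod f y = 2 ^ l := by
  have hq : 0 < q := hqo.pos
  rcases l with _ | l
  · exact fixed_pt hf (by positivity) hx
  have key : 3 ≤ minimalPeriod f^[2 ^ l] x := by
    rcases h with h | h
    · obtain ⟨t, rfl⟩ : ∃ t, k = l + (t + 2) := ⟨k - l - 2, by omega⟩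
      rw [pow_add, mul_assoc] at hx
      rw [down hx]
      have : 1 ≤ 2 ^ t * q := Nat.one_le_iff_ne_zero.2 (by positivity)
      have e : 2 ^ (t + 2) * q = 4 * (2 ^ t * q) := by ring
      omega
    · rw [minimalPeriod_iterate_eq_div_gcd (by positivity), hx]
      have hg : (2 ^ k * q).gcd (2 ^ l) ∣ 2 ^ l := Nat.gcd_dvd_right _ _
      have hg' : (2 ^ k * q).gcd (2 ^ l) ∣ 2 ^ k * q := Nat.gcd_dvd_left _ _
      set g := (2 ^ k * q).gcd (2 ^ l)
      have hcop : Nat.Coprime q g :=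
        Nat.Coprime.coprime_dvd_right hg (Nat.Coprime.pow_right _ (Nat.coprime_two_right.2 hqo))
      have hd : q ∣ 2 ^ k * q / g := by
        refine hcop.dvd_of_dvd_mul_left ?_
        rw [Nat.mul_div_cancel' hg']
        exact Dvd.intro_left _ rfl
      have hp : 0 < 2 ^ k * q / g :=
        Nat.div_pos (Nat.le_of_dvd (by positivity) hg') (Nat.pos_of_dvd_of_pos hg (by positivity))
      exact h.trans (Nat.le_of_dvd hp hd)
  obtain ⟨y, hy⟩ := period_two (hf.iterate _) key rfl
  exact ⟨y, by rw [lift_even (e := 1) one_pos (by simpa using hy)]; ring⟩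

theorem forcing {f : ℝ → ℝ} (hf : Continuous f) {x : ℝ} {m n : ℕ} (hm : 0 < m) (hn : 0 < n)
    (hmn : SharkLt m n) (hx : minimalPeriod f x = n) : ∃ y, minimalPeriod f y = m := by
  obtain ⟨hm1, hm2⟩ := oddPart_spec hm
  obtain ⟨hn1, hn2⟩ := oddPart_spec hn
  unfold SharkLt at hmn
  set k := n.factorization 2
  set l := m.factorization 2
  set q := oddPart n
  set r := oddPart m
  rw [hn1] at hx
  have three : ∀ t : ℕ, Odd t → t ≠ 1 → 3 ≤ t := by
    rintro t ⟨s, rfl⟩ h; omega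
  rcases hmn with ⟨h1, h2, h3⟩ | ⟨h1, h2⟩ | ⟨h1, h2, h3⟩
  · rw [h1, mul_one] at hm1
    rw [hm1]
    refine pow_two hf hn2 hx (Or.inl ?_)
    rw [hm1, hn1, h2, mul_one] at h3
    exact (Nat.pow_lt_pow_iff_right (by norm_num)).1 h3
  · rw [h1, mul_one] at hm1
    rw [hm1]
    exact pow_two hf hn2 hx (Or.inr (three _ hn2 h2))
  · rw [hm1]
    have hq := three _ hn2 h2
    rcases h3 with h3 | ⟨h3, h4⟩
    · exact up hf hq hn2 hx h3 hm2.pos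
    · obtain ⟨y, hy⟩ := period_odd (hf.iterate (2 ^ k)) q hq hn2 ⟨x, down hx⟩ r hm2 h4
      have hy' := hy
      rw [minimalPeriod_iterate_eq_div_gcd (by positivity)] at hy'
      obtain ⟨j, hj, hg⟩ :=
        (Nat.dvd_prime_pow Nat.prime_two).1 (Nat.gcd_dvd_right (minimalPeriod f y) (2 ^ k))
      have hN : minimalPeriod f y = 2 ^ j * r := by
        rw [← hy', ← hg]; exact (Nat.mul_div_cancel' (Nat.gcd_dvd_left _ _)).symm
      rw [h3]
      rcases Nat.eq_or_lt_of_le hj with rfl | hlt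
      · exact ⟨y, hN⟩
      · exact up hf (three _ hm2 h1) hm2 hN hlt hm2.pos

end Shark

/-- **Forcing among periods is the Sharkovsky ordering.** If `m <ₛ n` and a continuous
self-map of a closed interval has a cycle of period `n`, then it has a cycle of period `m`. -/
theorem sharkovsky_forcing (a b : ℝ) (hab : a ≤ b) (f : ℝ → ℝ)
    (hf : ContinuousOn f (Set.Icc a b))
    (hmaps : Set.MapsTo f (Set.Icc a b) (Set.Icc a b))
    (m n : ℕ) (hm : 0 < m) (hn : 0 < n) (hmn : SharkLt m n)
    (hcycle : ∃ x ∈ Set.Icc a b, Function.minimalPeriod f x = n) :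
    ∃ y ∈ Set.Icc a b, Function.minimalPeriod f y = m := by
  obtain ⟨x, hxI, hx⟩ := hcycle
  -- extend `f` continuously to the whole line
  let g : ℝ → ℝ := fun t => f (Set.projIcc a b hab t)
  have hg : Continuous g :=
    hf.comp_continuous (continuous_subtype_val.comp continuous_projIcc) fun t => (Set.projIcc a b hab t).2
  have hgI : ∀ t, g t ∈ Set.Icc a b := fun t => hmaps (Set.projIcc a b hab t).2
  have hgf : ∀ t ∈ Set.Icc a b, g t = f t := fun t ht => by
    simp only [g, Set.projIcc_of_mem hab ht]
  have hit : ∀ t ∈ Set.Icc a b, ∀ i, g^[i] t = f^[i] t ∧ f^[i] t ∈ Set.Icc a b := by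
    intro t ht i
    induction i with
    | zero => exact ⟨rfl, ht⟩
    | succ i ih =>
      rw [Function.iterate_succ_apply', Function.iterate_succ_apply', ih.1, hgf _ ih.2]
      exact ⟨rfl, hmaps ih.2⟩
  have hper : ∀ t ∈ Set.Icc a b, Function.minimalPeriod g t = Function.minimalPeriod f t := by
    intro t ht
    rw [Function.minimalPeriod_eq_minimalPeriod_iff]
    intro i
    unfold Function.IsPeriodicPt Function.IsFixedPt
    rw [(hit t ht i).1]
  obtain ⟨y, hy⟩ := Shark.forcing hg hm hn hmn ((hper x hxI).trans hx)
  have hyI : y ∈ Set.Icc a b := by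
    have h1 : g^[m] y = y := by rw [← hy]; exact Function.iterate_minimalPeriod
    obtain ⟨k, rfl⟩ : ∃ k, m = k + 1 := ⟨m - 1, by omega⟩
    rw [Function.iterate_succ_apply'] at h1
    rw [← h1]
    exact hgI _
  exact ⟨y, hyI, (hper y hyI).symm.trans hy⟩
end

section
/- Forcing among patterns of interval cycles is a partial ordering. In particular it is antisymmetric: if θ is a cyclic permutation of {1, …, n} and η is a cyclic permutation of {1, …, m}, θ forces η, and η forces θ, then n = m and θ = η. -/
/-- A permutation of `Fin n` is cyclic if it acts transitively. -/
def IsCyclicPerm {n : ℕ} (θ : Equiv.Perm (Fin n)) : Prop :=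
  ∀ i j : Fin n, ∃ k : ℕ, (θ ^ k) i = j

/-- `f` exhibits the pattern `θ` on `I` if it has points `p 0 < p 1 < ⋯ < p (n-1)` in `I`
with `f (p i) = p (θ i)` for all `i`. -/
def ExhibitsOn (f : ℝ → ℝ) (I : Set ℝ) {n : ℕ} (θ : Equiv.Perm (Fin n)) : Prop :=
  ∃ p : Fin n → ℝ, StrictMono p ∧ (∀ i, p i ∈ I) ∧ ∀ i, f (p i) = p (θ i)

/-- The pattern `θ` forces the pattern `η` if every continuous map of a closed interval
into itself exhibiting `θ` also exhibits `η`. -/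
def PatternForces {n m : ℕ} (θ : Equiv.Perm (Fin n)) (η : Equiv.Perm (Fin m)) : Prop :=
  ∀ a b : ℝ, a ≤ b → ∀ f : ℝ → ℝ, ContinuousOn f (Set.Icc a b) →
    Set.MapsTo f (Set.Icc a b) (Set.Icc a b) →
    ExhibitsOn f (Set.Icc a b) θ → ExhibitsOn f (Set.Icc a b) η

/-- Two cycles of the same map with a common point have the same pattern. -/
theorem same_pattern {n m : ℕ} {θ : Equiv.Perm (Fin n)} {η : Equiv.Perm (Fin m)}
    (hθ : IsCyclicPerm θ) (hη : IsCyclicPerm η) {g : ℝ → ℝ}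
    {p : Fin n → ℝ} {q : Fin m → ℝ} (hp : StrictMono p) (hq : StrictMono q)
    (hgp : ∀ i, g (p i) = p (θ i)) (hgq : ∀ i, g (q i) = q (η i))
    {i₀ : Fin n} {j₀ : Fin m} (h : p i₀ = q j₀) : n = m ∧ HEq θ η := by
  have key : ∀ k : ℕ, p ((θ ^ k) i₀) = q ((η ^ k) j₀) := by
    intro k
    induction k with
    | zero => simpa using h
    | succ k ih =>
      rw [pow_succ', pow_succ', Equiv.Perm.mul_apply, Equiv.Perm.mul_apply, ← hgp, ← hgq, ih]
  have hr : Set.range p = Set.range q := by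
    ext x
    constructor
    · rintro ⟨i, rfl⟩
      obtain ⟨k, rfl⟩ := hθ i₀ i
      exact ⟨_, (key k).symm⟩
    · rintro ⟨j, rfl⟩
      obtain ⟨k, rfl⟩ := hη j₀ j
      exact ⟨_, key k⟩
  have hnm : n = m := by
    have h1 := Set.ncard_range_of_injective hp.injective
    have h2 := Set.ncard_range_of_injective hq.injective
    rw [hr, h2] at h1
    simpa using h1.symm
  subst hnm
  refine ⟨rfl, heq_of_eq ?_⟩
  have hpq : p = q := (StrictMono.range_inj hp hq).1 hr
  subst hpq
  ext i
  have : p (θ i) = p (η i) := by rw [← hgp, ← hgq]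
  rw [hp.injective this]

/-- Forcing yields a cycle strictly inside the hull. -/
theorem step {n m : ℕ} {θ : Equiv.Perm (Fin n)} {η : Equiv.Perm (Fin m)}
    (hθ : IsCyclicPerm θ) (hη : IsCyclicPerm η) (hne : ¬ (n = m ∧ HEq θ η))
    (hforce : PatternForces θ η) {f : ℝ → ℝ} (hf : Continuous f)
    {p : Fin n → ℝ} (hp : StrictMono p) (hfp : ∀ i, f (p i) = p (θ i))
    (u v : Fin n) (hu : ∀ i, u ≤ i) (hv : ∀ i, i ≤ v) :
    ∃ q : Fin m → ℝ, StrictMono q ∧ (∀ i, f (q i) = q (η i)) ∧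
      ∀ i, p u < q i ∧ q i < p v := by
  have hab : p u ≤ p v := hp.monotone (hu v)
  have hI : ∀ i, p i ∈ Set.Icc (p u) (p v) := fun i =>
    ⟨hp.monotone (hu i), hp.monotone (hv i)⟩
  have hgp : ∀ i, (fun x => max (p u) (min (p v) (f x))) (p i) = p (θ i) := by
    intro i
    simp only [hfp]
    rw [min_eq_right (hI _).2, max_eq_right (hI _).1]
  obtain ⟨q, hq, hqI, hgq⟩ := hforce (p u) (p v) hab (fun x => max (p u) (min (p v) (f x)))
    (by fun_prop) (fun x _ => ⟨le_max_left _ _, max_le hab (min_le_left _ _)⟩)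
    ⟨p, hp, hI, hgp⟩
  have hd : ∀ i j, p i ≠ q j := fun i j h => hne (same_pattern
    (g := fun x => max (p u) (min (p v) (f x))) hθ hη hp hq hgp hgq h)
  have hin : ∀ i, p u < q i ∧ q i < p v := fun i =>
    ⟨lt_of_le_of_ne (hqI i).1 (hd u i), lt_of_le_of_ne (hqI i).2 (hd v i).symm⟩
  refine ⟨q, hq, fun i => ?_, hin⟩
  have h1 := hgq i
  have h2 := hin (η i)
  simp only at h1
  rw [← h1] at h2 ⊢
  have h3 : p u < min (p v) (f (q i)) := by
    rcases lt_max_iff.1 h2.1 with h | h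
    · exact absurd h (lt_irrefl _)
    · exact h
  rw [max_eq_right h3.le] at h2 ⊢
  rcases min_lt_iff.1 h2.2 with h | h
  · exact absurd h (lt_irrefl _)
  · rw [min_eq_right h.le]

theorem arccos_cos_abs {x : ℝ} (hx : |x| ≤ Real.pi) : Real.arccos (Real.cos x) = |x| := by
  rw [← Real.cos_abs, Real.arccos_cos (abs_nonneg _) hx]

/-- The triangle wave is locally an expansion around each point. -/
theorem wave_local (c : ℝ) : ∃ δ > 0, ∀ x, |x - c| < δ →
    |x - c| ≤ |Real.arccos (Real.cos x) - Real.arccos (Real.cos c)| := by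
  have hpi := Real.pi_pos
  have base : ∀ c : ℝ, |c| ≤ Real.pi / 2 → ∃ δ > 0, ∀ x, |x - c| < δ →
      |x - c| ≤ |Real.arccos (Real.cos x) - Real.arccos (Real.cos c)| := by
    intro c hc
    rw [arccos_cos_abs (x := c) (by linarith)]
    by_cases h0 : c = 0
    · subst h0
      refine ⟨Real.pi, hpi, fun x hx => ?_⟩
      simp only [sub_zero] at hx
      rw [arccos_cos_abs hx.le]
      simp
    · refine ⟨|c|, abs_pos.2 h0, fun x hx => ?_⟩
      have hx' : |x| ≤ Real.pi := by
        have := abs_sub_abs_le_abs_sub x c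
        linarith
      rw [arccos_cos_abs hx']
      rcases lt_or_gt_of_ne h0 with h | h
      · rw [abs_of_neg h] at hx ⊢
        have := (abs_lt.1 hx).2
        rw [abs_of_neg (by linarith : x < 0), show -x - -c = -(x - c) by ring, abs_neg]
      · rw [abs_of_pos h] at hx ⊢
        have := (abs_lt.1 hx).1
        rw [abs_of_pos (by linarith : 0 < x)]
  obtain ⟨δ, hδ, H⟩ := base (c - round (c / Real.pi) * Real.pi) (by
    have := abs_sub_round (c / Real.pi)
    have e : c - round (c / Real.pi) * Real.pi
        = (c / Real.pi - round (c / Real.pi)) * Real.pi := by field_simp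
    rw [e, abs_mul, abs_of_pos hpi]
    nlinarith)
  refine ⟨δ, hδ, fun x hx => ?_⟩
  have := H (x - round (c / Real.pi) * Real.pi) (by
    convert hx using 2; ring)
  rw [sub_sub_sub_cancel_right, Real.cos_sub_int_mul_pi, Real.cos_sub_int_mul_pi] at this
  rcases Int.even_or_odd (round (c / Real.pi)) with h | h
  · simpa [h.neg_one_zpow] using this
  · simp only [h.neg_one_zpow, neg_one_mul, Real.arccos_neg] at this
    rw [show Real.pi - Real.arccos (Real.cos x) - (Real.pi - Real.arccos (Real.cos c))
      = -(Real.arccos (Real.cos x) - Real.arccos (Real.cos c)) by ring, abs_neg] at this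
    exact this

/-- The piecewise linear map of slope `2n`. -/
noncomputable def tri (n : ℕ) (x : ℝ) : ℝ := Real.arccos (Real.cos (2 * n * x))

theorem tri_continuous (n : ℕ) : Continuous (tri n) := by
  unfold tri
  exact Real.continuous_arccos.comp (Real.continuous_cos.comp (by fun_prop))

theorem tri_local {n : ℕ} (hn : 0 < n) (c : ℝ) : ∃ δ > 0, ∀ x, |x - c| < δ →
    2 * |x - c| ≤ |tri n x - tri n c| := by
  obtain ⟨δ, hδ, H⟩ := wave_local (2 * n * c)
  have hn' : (1 : ℝ) ≤ n := by exact_mod_cast hn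
  have e : ∀ x : ℝ, |2 * n * x - 2 * n * c| = 2 * n * |x - c| := by
    intro x
    rw [← mul_sub, abs_mul, abs_of_pos (by positivity)]
  refine ⟨δ / (2 * n), by positivity, fun x hx => ?_⟩
  have := H (2 * n * x) (by
    rw [e]; rw [lt_div_iff₀ (by positivity)] at hx; linarith)
  rw [e] at this
  unfold tri
  nlinarith [abs_nonneg (x - c)]

theorem finite_cycles {n : ℕ} (hn : 0 < n) (θ : Equiv.Perm (Fin n)) :
    {p : Fin n → ℝ | ∀ i, tri n (p i) = p (θ i)}.Finite := by
  have : Nonempty (Fin n) := ⟨⟨0, hn⟩⟩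
  set A := {p : Fin n → ℝ | ∀ i, tri n (p i) = p (θ i)} with hA
  have hclosed : IsClosed A := by
    have : A = ⋂ i, {p : Fin n → ℝ | tri n (p i) = p (θ i)} := by
      ext p; simp [hA]
    rw [this]
    refine isClosed_iInter fun i => isClosed_eq ?_ (continuous_apply _)
    exact (tri_continuous n).comp (continuous_apply _)
  have hsub : A ⊆ Set.Icc (fun _ => 0) (fun _ => Real.pi) := by
    intro p hp
    have : ∀ i, p i = tri n (p (θ.symm i)) := fun i => by rw [hp, Equiv.apply_symm_apply]
    refine ⟨fun i => ?_, fun i => ?_⟩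
    · rw [this i]; exact Real.arccos_nonneg _
    · rw [this i]; exact Real.arccos_le_pi _
  have hcomp : IsCompact A := isCompact_Icc.of_isClosed_subset hclosed hsub
  refine hcomp.finite ?_
  rw [isDiscrete_iff_discreteTopology, discreteTopology_iff_isOpen_singleton]
  rintro ⟨q, hq⟩
  rw [Metric.isOpen_singleton_iff]
  choose δ hδ H using fun i => tri_local hn (q i)
  obtain ⟨i₁, hi₁⟩ := Finite.exists_min δ
  refine ⟨δ i₁, hδ i₁, ?_⟩
  rintro ⟨p, hp⟩ hd
  have hd' : ∀ i, |p i - q i| < δ i := by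
    intro i
    refine lt_of_lt_of_le ?_ (hi₁ i)
    have h1 : dist q p < δ i₁ ∨ dist p q < δ i₁ := by first | exact Or.inl hd | exact Or.inr hd
    rw [dist_comm q p, or_self] at h1
    exact lt_of_le_of_lt (dist_le_pi_dist p q i) h1
  obtain ⟨i, hi⟩ := Finite.exists_max fun i => |p i - q i|
  have h2 := H i (p i) (hd' i)
  rw [hp i, hq i] at h2
  have h3 := hi (θ i)
  have h0 : |p i - q i| ≤ 0 := by linarith
  have : p = q := by
    ext j
    have := (hi j).trans h0
    exact sub_eq_zero.1 (abs_nonpos_iff.1 this)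
  subst this
  rfl

theorem tri_exhibits {n : ℕ} (hn : 0 < n) (θ : Equiv.Perm (Fin n)) :
    ∃ p : Fin n → ℝ, StrictMono p ∧ ∀ i, tri n (p i) = p (θ i) := by
  have : Nonempty (Fin n) := ⟨⟨0, hn⟩⟩
  have hpi := Real.pi_pos
  have hn' : (1 : ℝ) ≤ n := by exact_mod_cast hn
  have hK : (0 : ℝ) < 2 * n := by positivity
  let F : (Fin n → ℝ) → (Fin n → ℝ) := fun x i => (2 * Real.pi * (i : ℕ) + x (θ i)) / (2 * n)
  have hF : ContractingWith (1 / 2) F := by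
    refine ⟨by rw [← NNReal.coe_lt_coe]; norm_num, LipschitzWith.of_dist_le_mul fun x y => ?_⟩
    refine (dist_pi_le_iff (by positivity)).2 fun i => ?_
    have h := dist_le_pi_dist x y (θ i)
    rw [Real.dist_eq] at h ⊢
    have e : F x i - F y i = (x (θ i) - y (θ i)) / (2 * n) := by
      simp only [F]; ring
    rw [e, abs_div, abs_of_pos hK, div_le_iff₀ hK]
    push_cast
    nlinarith [dist_nonneg (x := x) (y := y)]
  have hfix : F (hF.fixedPoint F) = hF.fixedPoint F := hF.fixedPoint_isFixedPt
  generalize hF.fixedPoint F = x at hfix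
  have hx : ∀ i, 2 * n * x i = 2 * Real.pi * (i : ℕ) + x (θ i) := by
    intro i
    have := congrFun hfix i
    simp only [F] at this
    rw [div_eq_iff hK.ne'] at this
    linarith
  have h0 : ∀ i, 0 ≤ x i := by
    obtain ⟨i, hi⟩ := Finite.exists_min x
    have h1 := hx i
    have h2 := hi (θ i)
    have h3 : 0 ≤ 2 * Real.pi * ((i : ℕ) : ℝ) := by positivity
    have : 0 ≤ x i := by
      by_contra hc
      push Not at hc
      nlinarith
    exact fun j => this.trans (hi j)
  have h1 : ∀ i, x i ≤ Real.pi := by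
    obtain ⟨i, hi⟩ := Finite.exists_max x
    have h1 := hx i
    have h2 := hi (θ i)
    have h3 : ((i : ℕ) : ℝ) + 1 ≤ n := by exact_mod_cast i.2
    have : x i ≤ Real.pi := by
      by_contra hc
      push Not at hc
      nlinarith
    exact fun j => (hi j).trans this
  refine ⟨x, fun i j hij => ?_, fun i => ?_⟩
  · have h3 : ((i : ℕ) : ℝ) + 1 ≤ (j : ℕ) := by exact_mod_cast hij
    have h4 := hx i
    have h5 := hx j
    have h6 := h1 (θ i)
    have h7 := h0 (θ j)
    have : 2 * n * x i < 2 * n * x j := by nlinarith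
    exact lt_of_mul_lt_mul_left this hK.le
  · unfold tri
    rw [hx, show 2 * Real.pi * ((i : ℕ) : ℝ) + x (θ i)
      = x (θ i) + ((i : ℕ) : ℝ) * (2 * Real.pi) by ring, Real.cos_add_nat_mul_two_pi,
      Real.arccos_cos (h0 _) (h1 _)]

/-- **Forcing among patterns is a partial ordering**: it is antisymmetric on cyclic
permutations (patterns of cycles). -/
theorem patternForces_antisymm {n m : ℕ} (hn : 0 < n) (hm : 0 < m)
    (θ : Equiv.Perm (Fin n)) (η : Equiv.Perm (Fin m))
    (hθ : IsCyclicPerm θ) (hη : IsCyclicPerm η)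
    (hforce₁ : PatternForces θ η) (hforce₂ : PatternForces η θ) :
    n = m ∧ HEq θ η := by
  by_contra hne
  have hne' : ¬ (m = n ∧ HEq η θ) := fun h => hne ⟨h.1.symm, h.2.symm⟩
  have bot : ∀ {k : ℕ} (hk : 0 < k) (i : Fin k), (⟨0, hk⟩ : Fin k) ≤ i := fun hk i =>
    Fin.le_def.2 (Nat.zero_le _)
  have top : ∀ {k : ℕ} (hk : 0 < k) (i : Fin k), i ≤ (⟨k - 1, by omega⟩ : Fin k) := fun hk i =>
    Fin.le_def.2 (by have := i.2; simp only; omega)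
  have hfin : {p : Fin n → ℝ | StrictMono p ∧ ∀ i, tri n (p i) = p (θ i)}.Finite :=
    (finite_cycles hn θ).subset fun p hp => hp.2
  obtain ⟨p, ⟨hp, hfp⟩, hmin⟩ := Set.exists_min_image _
    (fun p : Fin n → ℝ => p ⟨n - 1, by omega⟩ - p ⟨0, hn⟩) hfin (tri_exhibits hn θ)
  obtain ⟨q, hq, hfq, hin⟩ := step hθ hη hne hforce₁ (tri_continuous n) hp hfp
    ⟨0, hn⟩ ⟨n - 1, by omega⟩ (bot hn) (top hn)
  obtain ⟨r, hr, hfr, hin'⟩ := step hη hθ hne' hforce₂ (tri_continuous n) hq hfq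
    ⟨0, hm⟩ ⟨m - 1, by omega⟩ (bot hm) (top hm)
  have h := hmin r ⟨hr, hfr⟩
  have h1 := (hin ⟨0, hm⟩).1
  have h2 := (hin ⟨m - 1, by omega⟩).2
  have h3 := (hin' ⟨0, hn⟩).1
  have h4 := (hin' ⟨n - 1, by omega⟩).2
  linarith
end

section
/- Let I be a closed interval, let f : I → I be continuous, and let P be a cycle of f of period q ≥ 2. Then the over-rotation number p/q of P satisfies 0 < p/q ≤ 1/2. -/
open Function

/-- The number of sign changes of `f y - y` as `y` runs along the cyclic sequence
`x, f x, …, f^[q-1] x, f^[q] x (= x)`. -/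
noncomputable def overCount (f : ℝ → ℝ) (x : ℝ) (q : ℕ) : ℕ :=
  ((Finset.range q).filter fun i =>
    (f (f^[i] x) - f^[i] x) * (f (f^[i + 1] x) - f^[i + 1] x) < 0).card

/-- The over-rotation number `p/q = m/(2q)` of a cycle of period `q ≥ 2` of a continuous
interval map satisfies `0 < p/q ≤ 1/2`. -/
theorem overRotationNumber_mem (a b : ℝ) (hab : a ≤ b) (f : ℝ → ℝ)
    (hf : ContinuousOn f (Set.Icc a b))
    (hmaps : Set.MapsTo f (Set.Icc a b) (Set.Icc a b))
    (x : ℝ) (hx : x ∈ Set.Icc a b) (q : ℕ) (hq : 2 ≤ q)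
    (hper : minimalPeriod f x = q) :
    0 < (overCount f x q : ℚ) / (2 * q) ∧ (overCount f x q : ℚ) / (2 * q) ≤ 1 / 2 := by
  have hP : f^[q] x = x := by
    have := isPeriodicPt_minimalPeriod f x
    rw [hper] at this
    exact this
  have hfx : f x ≠ x := by
    intro h
    have h1 : minimalPeriod f x = 1 := minimalPeriod_eq_one_iff_isFixedPt.mpr h
    omega
  have hd : ∀ i, i ≤ q → f (f^[i] x) - f^[i] x ≠ 0 := by
    intro i hi h
    have h1 : IsFixedPt f (f^[i] x) := sub_eq_zero.mp h
    have h2 : f^[q - i] (f^[i] x) = f^[i] x := h1.iterate (q - i)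
    rw [← iterate_add_apply, Nat.sub_add_cancel hi, hP] at h2
    rw [← h2] at h1
    exact hfx h1
  have hpos : 0 < overCount f x q := by
    by_contra hc
    have h0 : overCount f x q = 0 := by omega
    unfold overCount at h0
    rw [Finset.card_eq_zero, Finset.filter_eq_empty_iff] at h0
    have key : ∀ i, i ≤ q → 0 < (f x - x) * (f (f^[i] x) - f^[i] x) := by
      intro i
      induction i with
      | zero =>
        intro _
        have : f x - x ≠ 0 := sub_ne_zero.mpr hfx
        simpa using mul_self_pos.mpr this
      | succ k ih =>
        intro hk
        have h1 := ih (by omega)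
        have h2 := not_lt.mp (h0 (Finset.mem_range.mpr (show k < q by omega)))
        have h3 := hd k (by omega)
        have h4 := hd (k + 1) hk
        have h5 := lt_of_le_of_ne h2 (mul_ne_zero h3 h4).symm
        have h6 := mul_pos h1 h5
        have h7 : 0 < (f (f^[k] x) - f^[k] x) ^ 2 := by positivity
        refine pos_of_mul_pos_right (a := (f (f^[k] x) - f^[k] x) ^ 2) ?_ h7.le
        linarith
    have hs : 0 < ∑ i ∈ Finset.range q, (f x - x) * (f (f^[i] x) - f^[i] x) :=
      Finset.sum_pos (fun i hi => key i (Finset.mem_range.mp hi).le)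
        ⟨0, Finset.mem_range.mpr (by omega)⟩
    rw [← Finset.mul_sum] at hs
    have ht := Finset.sum_range_sub (fun i => f^[i] x) q
    simp only [iterate_succ_apply', hP, iterate_zero, id, sub_self] at ht
    rw [ht] at hs
    simp at hs
  have hle : overCount f x q ≤ q := by
    unfold overCount
    exact (Finset.card_filter_le _ _).trans (by simp)
  have hq' : (0 : ℚ) < q := by
    exact_mod_cast (by omega : 0 < q)
  have hpos' : (0 : ℚ) < overCount f x q := by exact_mod_cast hpos
  have hle' : (overCount f x q : ℚ) ≤ q := by exact_mod_cast hle
  refine ⟨by positivity, ?_⟩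
  rw [div_le_div_iff₀ (by positivity) (by norm_num)]
  linarith
end

section
/- Every continuous map f : I → I of a closed interval I that has a cycle of period greater than 1 also has a cycle whose over-rotation number equals 1/2. -/
open Function

/-- Without points of period two, `f x > x` forces `f (f x) ≥ x`. -/
theorem le_sq_of_lt (a b : ℝ) (f : ℝ → ℝ)
    (hf : ContinuousOn f (Set.Icc a b))
    (hmaps : Set.MapsTo f (Set.Icc a b) (Set.Icc a b))
    (h2 : ∀ y ∈ Set.Icc a b, f (f y) = y → f y = y)
    (x : ℝ) (hx : x ∈ Set.Icc a b) (hfx : x < f x) : x < f (f x) := by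
  by_contra hlt
  push Not at hlt
  have hff : ContinuousOn (fun y => f (f y) - y) (Set.Icc a b) :=
    (hf.comp hf hmaps).sub continuousOn_id
  have ha : a ∈ Set.Icc a b := ⟨le_rfl, hx.1.trans hx.2⟩
  have hsub : ∀ u, a ≤ u → Set.Icc u x ⊆ Set.Icc a b := fun u hu y hy =>
    ⟨hu.trans hy.1, hy.2.trans hx.2⟩
  have key : ∀ u, a ≤ u → u ≤ x → u ≤ f (f u) → ∃ v ∈ Set.Icc u x, f (f v) - v = 0 := by
    intro u hu hux hfu
    have := intermediate_value_Icc' hux (hff.mono (hsub u hu))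
    obtain ⟨v, hv, hv'⟩ := this (show (0:ℝ) ∈ _ from ⟨by linarith, by linarith⟩)
    exact ⟨v, hv, hv'⟩
  obtain ⟨v, hv, hv0⟩ := key a le_rfl hx.1 (hmaps (hmaps ha)).1
  have hcomp : IsCompact (Set.Icc a x ∩ (fun y => f (f y) - y) ⁻¹' {0}) :=
    isCompact_Icc.of_isClosed_subset
      ((hff.mono (hsub a le_rfl)).preimage_isClosed_of_isClosed isClosed_Icc isClosed_singleton)
      Set.inter_subset_left
  obtain ⟨w, ⟨hw, hw0⟩, hwmax⟩ := hcomp.exists_isGreatest ⟨v, hv, hv0⟩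
  have hw0' : f (f w) = w := by
    have : f (f w) - w = 0 := hw0
    linarith
  have hfw := h2 w (hsub a le_rfl hw) hw0'
  have hwx : w < x := by
    rcases hw.2.lt_or_eq with h | h
    · exact h
    · rw [h] at hfw; linarith
  obtain ⟨y, hy, hyx⟩ := intermediate_value_Icc hwx.le (hf.mono (hsub w hw.1))
    (show x ∈ _ from ⟨by linarith, by linarith⟩)
  have hyw : w ≠ y := by
    rintro rfl
    linarith
  have hyw' : w < y := lt_of_le_of_ne hy.1 hyw
  obtain ⟨v, hv, hv0⟩ := key y (hw.1.trans hy.1) hy.2 (by rw [hyx]; linarith [hy.2])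
  have : v ≤ w := hwmax ⟨⟨hw.1.trans (hy.1.trans hv.1), hv.2⟩, hv0⟩
  linarith [hv.1]

/-- A map with a nontrivial cycle has a point of period two. -/
theorem exists_period_two (a b : ℝ) (f : ℝ → ℝ)
    (hf : ContinuousOn f (Set.Icc a b))
    (hmaps : Set.MapsTo f (Set.Icc a b) (Set.Icc a b))
    (hcycle : ∃ x ∈ Set.Icc a b, 1 < minimalPeriod f x) :
    ∃ y ∈ Set.Icc a b, f (f y) = y ∧ f y ≠ y := by
  by_contra hno
  push Not at hno
  have hA := le_sq_of_lt a b f hf hmaps hno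
  obtain ⟨x, hx, hn⟩ := hcycle
  set n := minimalPeriod f x with hndef
  have hper : x ∈ periodicPts f := minimalPeriod_pos_iff_mem_periodicPts.1 (by omega)
  let O : Set ℝ := Set.range fun i => f^[i] x
  have hOf : ∀ u ∈ O, f u ∈ O := by
    rintro _ ⟨i, rfl⟩
    exact ⟨i + 1, iterate_succ_apply' f i x⟩
  have hOI : ∀ u ∈ O, u ∈ Set.Icc a b := by
    rintro _ ⟨i, rfl⟩
    exact hmaps.iterate i hx
  have hOn : ∀ u ∈ O, minimalPeriod f u = n := by
    rintro _ ⟨i, rfl⟩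
    exact minimalPeriod_apply_iterate hper i
  have hOne : ∀ u ∈ O, f u ≠ u := by
    intro u hu h
    have h1 := hOn u hu
    have : minimalPeriod f u = 1 := minimalPeriod_eq_one_iff_isFixedPt.2 h
    omega
  have hfin : O.Finite := by
    apply (((Finset.range n).image fun i => f^[i] x).finite_toSet).subset
    rintro _ ⟨i, rfl⟩
    simp only [Finset.coe_image, Set.mem_image, Finset.coe_range, Set.mem_Iio]
    exact ⟨i % n, Nat.mod_lt _ (by omega), iterate_mod_minimalPeriod_eq⟩
  have hne : O.Nonempty := ⟨x, 0, rfl⟩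
  obtain ⟨m, hmO, hmmin⟩ := Set.exists_min_image O id hfin hne
  obtain ⟨p, ⟨hpO, hpU⟩, hpmax⟩ := Set.exists_max_image (O ∩ {u | u < f u}) id
    (hfin.subset Set.inter_subset_left)
    ⟨m, hmO, lt_of_le_of_ne (hmmin _ (hOf m hmO)) (hOne m hmO).symm⟩
  have hpU' : p < f p := hpU
  have hpI := hOI p hpO
  have hD : ∀ t ∈ O, p < t → f t < t := by
    intro t ht hpt
    by_contra hc
    push Not at hc
    have : t ≤ p := hpmax t ⟨ht, lt_of_le_of_ne hc (hOne t ht).symm⟩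
    linarith
  have hfpI := hmaps hpI
  have hg : ContinuousOn (fun y => f y - y) (Set.Icc a b) := hf.sub continuousOn_id
  have key : ∀ t, p ≤ t → t ≤ b → f t ≤ t → ∃ v ∈ Set.Icc p t, f v - v = 0 := by
    intro t hpt htb hft
    have := intermediate_value_Icc' hpt
      (hg.mono (Set.Icc_subset_Icc hpI.1 htb))
    obtain ⟨v, hv, hv'⟩ := this (show (0:ℝ) ∈ _ from ⟨by linarith, by linarith⟩)
    exact ⟨v, hv, hv'⟩
  have hcomp : IsCompact (Set.Icc p b ∩ (fun y => f y - y) ⁻¹' {0}) :=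
    isCompact_Icc.of_isClosed_subset
      ((hg.mono (Set.Icc_subset_Icc hpI.1 le_rfl)).preimage_isClosed_of_isClosed
        isClosed_Icc isClosed_singleton)
      Set.inter_subset_left
  obtain ⟨v, hv, hv0⟩ := key (f p) hpU'.le hfpI.2 (hD _ (hOf p hpO) hpU').le
  obtain ⟨z, ⟨hz, hz0⟩, hzmin⟩ := hcomp.exists_isLeast ⟨v, ⟨hv.1, hv.2.trans hfpI.2⟩, hv0⟩
  have hfz : f z = z := by
    have : f z - z = 0 := hz0
    linarith
  have hDz : ∀ t ∈ O, p < t → z ≤ t := by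
    intro t ht hpt
    obtain ⟨v, hv, hv0⟩ := key t hpt.le (hOI t ht).2 (hD t ht hpt).le
    exact (hzmin ⟨⟨hv.1, hv.2.trans (hOI t ht).2⟩, hv0⟩).trans hv.2
  have hzI : Set.Icc p z ⊆ Set.Icc a b := Set.Icc_subset_Icc hpI.1 hz.2
  obtain ⟨y0, hy0, hmax⟩ := isCompact_Icc.exists_isMaxOn (Set.nonempty_Icc.2 hz.1) (hf.mono hzI)
  have hle : ∀ y ∈ Set.Icc p z, f y ≤ f y0 := fun y hy => hmax hy
  have hU : ∀ y ∈ Set.Icc p z, y ≠ z → y < f y := by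
    intro y hy hyz
    by_contra hc
    push Not at hc
    obtain ⟨v, hv, hv0⟩ := key y hy.1 (hy.2.trans hz.2) hc
    have : z ≤ v := hzmin ⟨⟨hv.1, hv.2.trans (hy.2.trans hz.2)⟩, hv0⟩
    exact hyz (le_antisymm hy.2 (this.trans hv.2))
  have hinv : ∀ k, f^[k + 1] p ∈ O ∧ p < f^[k + 1] p ∧ f^[k + 1] p ≤ f y0 := by
    intro k
    induction k with
    | zero => exact ⟨hOf p hpO, hpU', hle p ⟨le_rfl, hz.1⟩⟩
    | succ k ih =>
      rw [iterate_succ_apply']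
      set t := f^[k + 1] p
      obtain ⟨htO, hpt, hts⟩ := ih
      refine ⟨hOf t htO, ?_, (hD t htO hpt).le.trans hts⟩
      have hzt := hDz t htO hpt
      obtain ⟨y, hy, hyt⟩ := intermediate_value_Icc' hy0.2
        (hf.mono (Set.Icc_subset_Icc (hpI.1.trans hy0.1) hz.2))
        (show t ∈ _ from ⟨by rw [hfz]; exact hzt, hts⟩)
      have hyz : y ≠ z := by
        rintro rfl
        exact hOne t htO (by rw [← hyt, hfz, hfz])
      have hyp : y ∈ Set.Icc p z := ⟨hy0.1.trans hy.1, hy.2⟩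
      have := hA y (hzI hyp) (hU y hyp hyz)
      rw [hyt] at this
      exact lt_of_le_of_lt hyp.1 this
  have h1 := (hinv (n - 1)).2.1
  have h3 : f^[n] p = p := by
    rw [← hOn p hpO]
    exact iterate_minimalPeriod
  rw [show n - 1 + 1 = n by omega, h3] at h1
  exact lt_irrefl _ h1

/-- Every continuous interval map with a cycle of period larger than `1` has a cycle
whose over-rotation number equals `1/2`. -/
theorem exists_cycle_overRotationNumber_half (a b : ℝ) (hab : a ≤ b) (f : ℝ → ℝ)
    (hf : ContinuousOn f (Set.Icc a b))
    (hmaps : Set.MapsTo f (Set.Icc a b) (Set.Icc a b))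
    (hcycle : ∃ x ∈ Set.Icc a b, 1 < minimalPeriod f x) :
    ∃ y ∈ Set.Icc a b, 2 ≤ minimalPeriod f y ∧
      (overCount f y (minimalPeriod f y) : ℚ) / (2 * (minimalPeriod f y : ℚ)) = 1 / 2 := by
  obtain ⟨y, hy, hy2, hy1⟩ := exists_period_two a b f hf hmaps hcycle
  have hp : minimalPeriod f y = 2 := by
    have : Fact (Nat.Prime 2) := ⟨Nat.prime_two⟩
    exact minimalPeriod_eq_prime hy2 hy1
  have hc : overCount f y 2 = 2 := by
    have hpos : 0 < (f y - y) ^ 2 := by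
      have := sub_ne_zero.2 hy1
      positivity
    unfold overCount
    rw [Finset.filter_true_of_mem]
    · simp
    · intro i hi
      have : i = 0 ∨ i = 1 := by
        have := Finset.mem_range.1 hi
        omega
      rcases this with rfl | rfl
      · simp only [iterate_zero, id, zero_add, iterate_one, hy2]
        nlinarith
      · simp only [iterate_succ, iterate_zero, comp, id, hy2]
        nlinarith
  refine ⟨y, hy, hp.ge, ?_⟩
  rw [hp, hc]
  norm_num
end
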